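/- arXiv:2506.15356 — 2 statements merged into one kernel-verified Lean document; each statement's English description precedes it below -/
import Mathlib

section
/- Uniform L¹ bound for the truncated single-layer integral of E_x: For every a ∈ ℝ, every t > 0, every δ ∈ (0,t) and every x ∈ ℝ with x ≠ a, ∫_{t−δ}^{t} |E_x(x − a, t − τ)| dτ ≤ 1/2. -/
open MeasureTheory Real Filter Set Topology intervalIntegral

/-- The Wright function `W(z; -β, δ) = ∑ z^k/(k! Γ(δ - βk))`, with `1/Γ` the
entire reciprocal Gamma function (here `Real.Gamma` vanishes at nonpositive
integers, so division gives the correct value `0`). -/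
noncomputable def wrightW (β δ z : ℝ) : ℝ :=
  ∑' k : ℕ, z ^ k / (k.factorial * Real.Gamma (δ - β * k))

/-- Laplace convolution on `(0, ∞)`. -/
noncomputable def laplaceConv (f g : ℝ → ℝ) : ℝ → ℝ :=
  fun t => ∫ τ in (0:ℝ)..t, f τ * g (t - τ)

/-- Iterated Laplace convolution `h₀ ∗ h₁ ∗ ⋯ ∗ hₙ`. -/
noncomputable def iterConv : (n : ℕ) → (Fin (n + 1) → ℝ → ℝ) → ℝ → ℝ
  | 0, h => h 0
  | n + 1, h => laplaceConv (iterConv n (fun i => h i.castSucc)) (h (Fin.last (n + 1)))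

/-- `S^μ_m(t; -ℓ₁, …, -ℓ_m; -α₁, …, -α_m)` with the decomposition `μ₁ = μ`,
`μ_j = 0` for `j ≥ 2`: the Laplace convolution of
`h_j(t) = t^{μ_j - 1} W(-ℓ_j t^{-α_j}; -α_j, μ_j)`.  Indices run over
`Fin (n+1)`, i.e. the number of terms is `m = n + 1 ≥ 1`. -/
noncomputable def Sconv (n : ℕ) (μ : ℝ) (α ℓ : Fin (n + 1) → ℝ) : ℝ → ℝ :=
  iterConv n (fun j t =>
    t ^ ((if j = 0 then μ else 0) - 1) *
      wrightW (α j) (if j = 0 then μ else 0) (-(ℓ j) * t ^ (-(α j))))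

/-- `Γ^μ₁(x,t)`. -/
noncomputable def Gam1 (n : ℕ) (α lam : Fin (n + 1) → ℝ) (μ x t : ℝ) : ℝ :=
  (4 * Real.pi) ^ (-(1/2 : ℝ)) *
    ∫ p in Set.Ioi (0:ℝ),
      p ^ (-(1/2 : ℝ)) * Real.exp (-(|x| ^ 2) / (4 * p)) *
        Sconv n μ α (fun j => lam j * p) t

/-- The kernel `E(x,t) = Γ⁰₁(x,t)`. -/
noncomputable def kerE (n : ℕ) (α lam : Fin (n + 1) → ℝ) (x t : ℝ) : ℝ :=
  Gam1 n α lam 0 x t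

/-- `E_x`, the spatial derivative of `E`. -/
noncomputable def kerEx (n : ℕ) (α lam : Fin (n + 1) → ℝ) (x t : ℝ) : ℝ :=
  deriv (fun y => kerE n α lam y t) x

/-- `E_xx`, the second spatial derivative of `E`. -/
noncomputable def kerExx (n : ℕ) (α lam : Fin (n + 1) → ℝ) (x t : ℝ) : ℝ :=
  deriv (fun y => kerEx n α lam y t) x

/-- The kernel `Z(x,t) = ∑ₖ λₖ Γ^{1-αₖ}₁(x,t)`. -/
noncomputable def kerZ (n : ℕ) (α lam : Fin (n + 1) → ℝ) (x t : ℝ) : ℝ :=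
  ∑ k : Fin (n + 1), lam k * Gam1 n α lam (1 - α k) x t

/-- `Z_x`, the spatial derivative of `Z`. -/
noncomputable def kerZx (n : ℕ) (α lam : Fin (n + 1) → ℝ) (x t : ℝ) : ℝ :=
  deriv (fun y => kerZ n α lam y t) x

/-- `Z_xx`, the second spatial derivative of `Z`. -/
noncomputable def kerZxx (n : ℕ) (α lam : Fin (n + 1) → ℝ) (x t : ℝ) : ℝ :=
  deriv (fun y => kerZx n α lam y t) x

/-!
For `0 < α < 1` let `g_l` be the one-sided stable density, with Laplace transform `exp (-l s^α)`.
It is the pointwise limit of the rescaled Taylor coefficients of `exp (-L (1 - z)^α)`: expanding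
both in powers of `L`, resp. `l`, this reduces to the Gauss limit formula for `1 / Γ`, applied
termwise to the coefficients of `(1 - z)^(α k)`. Since `1 - (1 - z)^α` has nonnegative coefficients
(it generates the Sibuya distribution), the coefficients of `exp (-L (1 - z)^α)` are those of a
compound Poisson law. They are therefore nonnegative with explicit exponential moments, and Fatou's
lemma gives `∫ exp (-s t) |g_l t| dt ≤ exp (-l s^α)`.

Such bounds multiply under Laplace convolution, so the densities `S(p, ·)` in the definition of `E`
satisfy `∫ exp (-s t) |S(p, t)| dt ≤ exp (-p ∑ λ_j s^(α_j))`. As `E` averages the heat kernel over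
`p` against `S(p, ·)`, Tonelli's theorem bounds `∫ |E_x(y, t)| dt` by the integral over `p` of the
absolute value of the spatial derivative of the heat kernel at `y`, which is exactly `1 / 2`.
-/

open PowerSeries (coeff rescale binomialSeries)
open scoped PowerSeries Nat

/-! ### Compound Poisson laws and the Sibuya distribution -/

section CoeffPow

variable {R : Type*} [CommSemiring R] [PartialOrder R] [IsOrderedRing R] {A B : R⟦X⟧}

lemma coeff_pow_nonneg (hA : ∀ j, 0 ≤ coeff j A) (i j : ℕ) : 0 ≤ coeff j (A ^ i) := by
  induction i generalizing j with
  | zero => rw [pow_zero, PowerSeries.coeff_one]; split_ifs <;> simp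
  | succ i ih =>
    rw [pow_succ, PowerSeries.coeff_mul]
    exact Finset.sum_nonneg fun p _ => mul_nonneg (ih _) (hA _)

lemma sum_range_coeff_mul_le (hA : ∀ j, 0 ≤ coeff j A) (hB : ∀ j, 0 ≤ coeff j B) (J : ℕ) :
    ∑ j ∈ Finset.range J, coeff j (A * B) ≤
      (∑ j ∈ Finset.range J, coeff j A) * ∑ j ∈ Finset.range J, coeff j B := by
  rw [Finset.sum_mul_sum, ← Finset.sum_product']
  refine le_trans (Finset.sum_le_sum fun j hj => ?_)
    (Finset.sum_fiberwise_le_sum_of_sum_fiber_nonneg (g := fun q : ℕ × ℕ => q.1 + q.2)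
      (t := Finset.range J) fun j _ => Finset.sum_nonneg fun q _ => mul_nonneg (hA _) (hB _))
  rw [PowerSeries.coeff_mul]
  refine (Finset.sum_congr ?_ fun _ _ => rfl).le
  ext q
  rw [Finset.HasAntidiagonal.mem_antidiagonal]
  simp only [Finset.mem_filter, Finset.mem_product, Finset.mem_range] at hj ⊢
  omega

lemma sum_range_coeff_pow_le (hA : ∀ j, 0 ≤ coeff j A) (J i : ℕ) :
    ∑ j ∈ Finset.range J, coeff j (A ^ i) ≤ (∑ j ∈ Finset.range J, coeff j A) ^ i := by
  induction i with
  | zero =>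
    simp only [pow_zero, PowerSeries.coeff_one, Finset.sum_ite_eq']
    split_ifs <;> simp
  | succ i ih =>
    rw [pow_succ, pow_succ]
    exact (sum_range_coeff_mul_le (coeff_pow_nonneg hA i) hA J).trans
      (mul_le_mul_of_nonneg_right ih (Finset.sum_nonneg fun j _ => hA j))

lemma sum_range_coeff_pow_mul_pow_le (hA : ∀ j, 0 ≤ coeff j A) {z : R} (hz : 0 ≤ z) (J i : ℕ) :
    ∑ j ∈ Finset.range J, coeff j (A ^ i) * z ^ j ≤
      (∑ j ∈ Finset.range J, coeff j A * z ^ j) ^ i := by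
  have hnonneg : ∀ j, 0 ≤ coeff j (rescale z A) := by
    intro j
    rw [PowerSeries.coeff_rescale]
    exact mul_nonneg (pow_nonneg hz j) (hA j)
  simpa only [← map_pow, PowerSeries.coeff_rescale, mul_comm] using
    sum_range_coeff_pow_le hnonneg J i

end CoeffPow

/-- `A` is the generating function of a sub-probability distribution on `ℕ`. The total mass is
bounded through partial sums, so that no summability has to be carried along. -/
structure IsSubPGF (A : ℝ⟦X⟧) : Prop where
  coeff_nonneg : ∀ j, 0 ≤ coeff j A
  sum_coeff_le_one : ∀ J, ∑ j ∈ Finset.range J, coeff j A ≤ 1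

/-- The weight at `j` of the compound Poisson law of rate `L` whose jumps have generating
function `A`, that is, the `j`-th Taylor coefficient of `exp (-L (1 - A))`. -/
noncomputable def compoundPoisson (A : ℝ⟦X⟧) (L : ℝ) (j : ℕ) : ℝ :=
  Real.exp (-L) * ∑' i : ℕ, L ^ i / i ! * coeff j (A ^ i)

lemma compoundPoisson_nonneg {A : ℝ⟦X⟧} (hA : ∀ j, 0 ≤ coeff j A) {L : ℝ} (hL : 0 ≤ L) (j : ℕ) :
    0 ≤ compoundPoisson A L j :=
  mul_nonneg (Real.exp_pos _).le
    (tsum_nonneg fun i => mul_nonneg (by positivity) (coeff_pow_nonneg hA i j))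

namespace IsSubPGF

variable {A : ℝ⟦X⟧}

lemma coeff_pow_le_one (hA : IsSubPGF A) (i j : ℕ) : coeff j (A ^ i) ≤ 1 :=
  calc coeff j (A ^ i) ≤ ∑ k ∈ Finset.range (j + 1), coeff k (A ^ i) :=
        Finset.single_le_sum (fun k _ => coeff_pow_nonneg hA.coeff_nonneg i k)
          (Finset.self_mem_range_succ j)
    _ ≤ (∑ k ∈ Finset.range (j + 1), coeff k A) ^ i := sum_range_coeff_pow_le hA.coeff_nonneg _ i
    _ ≤ 1 := pow_le_one₀ (Finset.sum_nonneg fun k _ => hA.coeff_nonneg k) (hA.sum_coeff_le_one _)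

lemma summable_norm_poisson_mul_coeff_pow (hA : IsSubPGF A) (L : ℝ) (j : ℕ) :
    Summable fun i : ℕ => ‖L ^ i / i ! * coeff j (A ^ i)‖ := by
  refine (Real.summable_pow_div_factorial L).norm.of_nonneg_of_le (fun _ => norm_nonneg _)
    fun i => ?_
  rw [norm_mul, Real.norm_of_nonneg (coeff_pow_nonneg hA.coeff_nonneg i j)]
  exact mul_le_of_le_one_right (norm_nonneg _) (hA.coeff_pow_le_one i j)

/-- The Cauchy product of the series of `exp (-L)` and `exp (L A)` is that of `exp (-L (1 - A))`. -/
lemma hasSum_compoundPoisson (hA : IsSubPGF A) (L : ℝ) (j : ℕ) :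
    HasSum (fun k : ℕ => (-L) ^ k / k ! * coeff j ((1 - A) ^ k)) (compoundPoisson A L j) := by
  have hexp : Summable fun l : ℕ => ‖(-L) ^ l / (l ! : ℝ)‖ :=
    (Real.summable_pow_div_factorial (-L)).norm
  have hpow := hA.summable_norm_poisson_mul_coeff_pow L j
  have hterm : ∀ k : ℕ, (-L) ^ k / k ! * coeff j ((1 - A) ^ k) =
      ∑ q ∈ Finset.HasAntidiagonal.antidiagonal k,
        (-L) ^ q.1 / (q.1 ! : ℝ) * (L ^ q.2 / q.2 ! * coeff j (A ^ q.2)) := by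
    intro k
    rw [sub_eq_add_neg, (Commute.all 1 (-A)).add_pow', map_sum, Finset.mul_sum]
    refine Finset.sum_congr rfl fun q hq => ?_
    obtain rfl := Finset.HasAntidiagonal.mem_antidiagonal.mp hq
    have hchoose : (((q.1 + q.2).choose q.1 : ℕ) : ℝ) = (q.1 + q.2)! / (q.1 ! * q.2 !) :=
      Nat.cast_add_choose ℝ
    have hsign : coeff j ((-A) ^ q.2) = (-1) ^ q.2 * coeff j (A ^ q.2) := by
      rcases Nat.even_or_odd q.2 with h | h <;> simp [h.neg_pow]
    have hL : (-L) ^ q.2 * (-1) ^ q.2 = L ^ q.2 := by rw [← mul_pow]; ring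
    rw [one_pow, one_mul, map_nsmul, hsign, nsmul_eq_mul, hchoose, pow_add, ← hL]
    field_simp
  rw [compoundPoisson, ← neg_one_mul L, neg_one_mul, Real.exp_eq_exp_ℝ,
    NormedSpace.exp_eq_tsum_div (𝔸 := ℝ),
    tsum_mul_tsum_eq_tsum_sum_antidiagonal_of_summable_norm hexp hpow]
  simp only [hterm]
  exact (summable_norm_sum_mul_antidiagonal_of_summable_norm hexp hpow).of_norm.hasSum

lemma sum_compoundPoisson_mul_pow_le (hA : IsSubPGF A) {L z q : ℝ} (hL : 0 ≤ L) (hz : 0 ≤ z)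
    (hq : ∀ J, ∑ j ∈ Finset.range J, coeff j A * z ^ j ≤ q) (J : ℕ) :
    ∑ j ∈ Finset.range J, compoundPoisson A L j * z ^ j ≤ Real.exp (-(L * (1 - q))) := by
  have hsum := fun j => (hA.summable_norm_poisson_mul_coeff_pow L j).of_norm
  have hpow : ∀ i, ∑ j ∈ Finset.range J, coeff j (A ^ i) * z ^ j ≤ q ^ i := fun i =>
    (sum_range_coeff_pow_mul_pow_le hA.coeff_nonneg hz J i).trans (pow_le_pow_left₀
      (Finset.sum_nonneg fun j _ => mul_nonneg (hA.coeff_nonneg j) (pow_nonneg hz j)) (hq J) i)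
  calc ∑ j ∈ Finset.range J, compoundPoisson A L j * z ^ j
      = Real.exp (-L) * ∑' i : ℕ, L ^ i / i ! *
          ∑ j ∈ Finset.range J, coeff j (A ^ i) * z ^ j := by
        simp only [Finset.mul_sum, ← mul_assoc]
        rw [Summable.tsum_finsetSum fun j _ => (hsum j).mul_right (z ^ j), Finset.mul_sum]
        exact Finset.sum_congr rfl fun j _ => by rw [compoundPoisson, tsum_mul_right, mul_assoc]
    _ ≤ Real.exp (-L) * ∑' i : ℕ, L ^ i / i ! * q ^ i := by
        refine mul_le_mul_of_nonneg_left (Summable.tsum_le_tsum (fun i => ?_) ?_ ?_)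
          (Real.exp_pos _).le
        · exact mul_le_mul_of_nonneg_left (hpow i) (by positivity)
        · simp only [Finset.mul_sum, ← mul_assoc]
          exact summable_sum fun j _ => (hsum j).mul_right (z ^ j)
        · simpa only [mul_pow, div_mul_eq_mul_div] using Real.summable_pow_div_factorial (L * q)
    _ = Real.exp (-(L * (1 - q))) := by
        have hexp : ∑' i : ℕ, L ^ i / i ! * q ^ i = Real.exp (L * q) := by
          rw [Real.exp_eq_exp_ℝ, NormedSpace.exp_eq_tsum_div (𝔸 := ℝ)]
          simp only [mul_pow, div_mul_eq_mul_div]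
        rw [hexp, ← Real.exp_add]
        ring_nf

end IsSubPGF

/-- The power series `(1 - X)^b` with real exponent `b`. -/
noncomputable def oneSubPow (b : ℝ) : ℝ⟦X⟧ := rescale (-1) (binomialSeries ℝ b)

lemma coeff_oneSubPow (b : ℝ) (j : ℕ) : coeff j (oneSubPow b) = (-1) ^ j * Ring.choose b j := by
  simp [oneSubPow]

lemma coeff_zero_oneSubPow (b : ℝ) : coeff 0 (oneSubPow b) = 1 := by
  simp [coeff_oneSubPow]

lemma coeff_succ_oneSubPow (b : ℝ) (j : ℕ) :
    coeff (j + 1) (oneSubPow b) = coeff j (oneSubPow b) * ((j - b) / (j + 1)) := by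
  have hchoose : (j + 1) * Ring.choose b (j + 1) = Ring.choose b j * (b - j) := by
    simpa using Ring.choose_smul_choose b j.le_succ
  have hj : (j : ℝ) + 1 ≠ 0 := by positivity
  rw [coeff_oneSubPow, coeff_oneSubPow, pow_succ, mul_div_assoc', eq_div_iff hj]
  linear_combination (-(-1) ^ j) * hchoose

lemma coeff_oneSubPow_eq_prod (b : ℝ) (j : ℕ) :
    coeff j (oneSubPow b) = ∏ i ∈ Finset.range j, ((i : ℝ) - b) / (i + 1) := by
  induction j with
  | zero => exact coeff_zero_oneSubPow b
  | succ j ih => rw [coeff_succ_oneSubPow, ih, Finset.prod_range_succ]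

lemma oneSubPow_mul_natCast (b : ℝ) (k : ℕ) : oneSubPow (b * k) = oneSubPow b ^ k := by
  induction k with
  | zero => simp [oneSubPow]
  | succ k ih =>
    rw [pow_succ, ← ih, oneSubPow, oneSubPow, oneSubPow, ← map_mul,
      ← PowerSeries.binomialSeries_add, Nat.cast_succ, mul_add_one]

lemma hasSum_coeff_oneSubPow_mul_pow (b : ℝ) {z : ℝ} (hz : |z| < 1) :
    HasSum (fun j => coeff j (oneSubPow b) * z ^ j) ((1 - z) ^ b) := by
  have h := (Real.one_add_rpow_hasFPowerSeriesOnBall_zero (a := b)).hasSum (y := -z)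
    (by simpa [enorm_eq_nnnorm, ← NNReal.coe_lt_coe] using hz)
  simp only [zero_add] at h
  rw [sub_eq_add_neg]
  refine h.congr_fun fun j => ?_
  rw [binomialSeries_apply, coeff_oneSubPow, neg_eq_neg_one_mul z]
  simp only [neg_mul, one_mul, List.ofFn_const, List.prod_replicate, smul_eq_mul]
  ring

/-- The generating function `1 - (1 - X)^α` of the Sibuya distribution. -/
noncomputable def sibuya (α : ℝ) : ℝ⟦X⟧ := 1 - oneSubPow α

lemma coeff_sibuya_nonneg {α : ℝ} (h0 : 0 ≤ α) (h1 : α ≤ 1) (j : ℕ) : 0 ≤ coeff j (sibuya α) := by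
  rcases j with _ | j
  · rw [sibuya, map_sub, coeff_zero_oneSubPow, PowerSeries.coeff_zero_one, sub_self]
  · have hcoeff : coeff (j + 1) (oneSubPow α) ≤ 0 := by
      rw [coeff_oneSubPow_eq_prod, Finset.prod_range_succ']
      refine mul_nonpos_of_nonneg_of_nonpos (Finset.prod_nonneg fun i _ => ?_) (by simpa using h0)
      push_cast
      exact div_nonneg (by linarith [i.cast_nonneg (α := ℝ)]) (by positivity)
    simpa [sibuya, PowerSeries.coeff_one] using hcoeff

lemma sum_coeff_sibuya_mul_pow_le {α z : ℝ} (h0 : 0 ≤ α) (h1 : α ≤ 1) (hz : z ∈ Icc 0 1) (J : ℕ) :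
    ∑ j ∈ Finset.range J, coeff j (sibuya α) * z ^ j ≤ 1 - (1 - z) ^ α := by
  set S := {y : ℝ | ∑ j ∈ Finset.range J, coeff j (sibuya α) * y ^ j ≤ 1 - (1 - y) ^ α}
  have hclosed : IsClosed S := isClosed_le (by fun_prop)
    (continuous_const.sub ((continuous_const.sub continuous_id).rpow_const fun _ => .inr h0))
  have hsub : Ico 0 1 ⊆ S := by
    intro y hy
    have hsum : HasSum (fun j => coeff j (sibuya α) * y ^ j) (1 - (1 - y) ^ α) := by
      refine ((hasSum_ite_eq 0 (1 : ℝ)).sub (hasSum_coeff_oneSubPow_mul_pow α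
        (by rw [abs_of_nonneg hy.1]; exact hy.2))).congr_fun fun j => ?_
      rw [sibuya, map_sub, PowerSeries.coeff_one, sub_mul]
      rcases j with _ | j <;> simp
    exact sum_le_hasSum _
      (fun j _ => mul_nonneg (coeff_sibuya_nonneg h0 h1 j) (pow_nonneg hy.1 j)) hsum
  -- `hasSum_coeff_oneSubPow_mul_pow` excludes `z = 1`, which is reached by continuity.
  exact closure_minimal hsub hclosed (by rwa [closure_Ico (zero_ne_one' ℝ)])

lemma isSubPGF_sibuya {α : ℝ} (h0 : 0 ≤ α) (h1 : α ≤ 1) : IsSubPGF (sibuya α) where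
  coeff_nonneg := coeff_sibuya_nonneg h0 h1
  sum_coeff_le_one J := by
    have h := sum_coeff_sibuya_mul_pow_le h0 h1 (right_mem_Icc.mpr zero_le_one) J
    simp only [one_pow, mul_one, sub_self] at h
    linarith [Real.rpow_nonneg (le_refl (0 : ℝ)) α]

/-- The `j`-th Taylor coefficient of `exp (-L (1 - z)^α)`, a discrete analogue of the one-sided
stable density. -/
noncomputable def stableWeight (α L : ℝ) (j : ℕ) : ℝ := compoundPoisson (sibuya α) L j

lemma stableWeight_nonneg {α L : ℝ} (h0 : 0 ≤ α) (h1 : α ≤ 1) (hL : 0 ≤ L) (j : ℕ) :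
    0 ≤ stableWeight α L j :=
  compoundPoisson_nonneg (coeff_sibuya_nonneg h0 h1) hL j

lemma hasSum_stableWeight {α : ℝ} (h0 : 0 ≤ α) (h1 : α ≤ 1) (L : ℝ) (j : ℕ) :
    HasSum (fun k : ℕ => (-L) ^ k / k ! * coeff j (oneSubPow (α * k))) (stableWeight α L j) := by
  simpa only [oneSubPow_mul_natCast, stableWeight, sibuya, sub_sub_cancel] using
    (isSubPGF_sibuya h0 h1).hasSum_compoundPoisson L j

lemma sum_stableWeight_mul_pow_le {α L z : ℝ} (h0 : 0 ≤ α) (h1 : α ≤ 1) (hL : 0 ≤ L)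
    (hz : z ∈ Icc 0 1) (J : ℕ) :
    ∑ j ∈ Finset.range J, stableWeight α L j * z ^ j ≤ Real.exp (-(L * (1 - z) ^ α)) := by
  simpa only [stableWeight, sub_sub_cancel] using
    (isSubPGF_sibuya h0 h1).sum_compoundPoisson_mul_pow_le hL hz.1
      (sum_coeff_sibuya_mul_pow_le h0 h1 hz) J

/-! ### The stable density as a limit of discrete weights -/

lemma abs_coeff_oneSubPow_le_pow_div {b : ℝ} {j : ℕ} (hj : j ≤ b + 1) :
    |coeff j (oneSubPow b)| ≤ |b| ^ j / j ! := by
  induction j with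
  | zero => simp [coeff_zero_oneSubPow]
  | succ j ih =>
    push_cast at hj
    have hfactor : |(j : ℝ) - b| ≤ |b| := by
      rw [abs_of_nonneg (by linarith : 0 ≤ b), abs_le]
      constructor <;> linarith [j.cast_nonneg (α := ℝ)]
    rw [coeff_succ_oneSubPow, abs_mul, abs_div, abs_of_nonneg (by positivity : (0 : ℝ) ≤ j + 1),
      Nat.factorial_succ, pow_succ]
    push_cast
    rw [mul_comm ((j : ℝ) + 1), mul_div_mul_comm]
    exact mul_le_mul (ih (by linarith)) (by gcongr) (by positivity) (by positivity)

lemma sub_div_mul_rpow_le {b : ℝ} (hb : -1 ≤ b) (j : ℕ) :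
    (j - b) / (j + 1) * (j + 2) ^ (b + 1) ≤ (j + 1 : ℝ) ^ (b + 1) := by
  have hj : (0 : ℝ) < j + 1 := by positivity
  have hratio : (j - b) / (j + 1) ≤ Real.exp (-((b + 1) / (j + 1))) := by
    refine le_trans (le_of_eq ?_) (Real.add_one_le_exp _)
    field_simp
    ring
  have hstep : (j : ℝ) + 2 ≤ (j + 1) * Real.exp (1 / (j + 1)) := by
    refine le_trans (le_of_eq ?_)
      (mul_le_mul_of_nonneg_left (Real.add_one_le_exp (1 / ((j : ℝ) + 1))) hj.le)
    field_simp
    ring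
  have hpow : (j + 2 : ℝ) ^ (b + 1) ≤ (j + 1) ^ (b + 1) * Real.exp ((b + 1) / (j + 1)) := by
    refine (Real.rpow_le_rpow (by positivity) hstep (by linarith)).trans (le_of_eq ?_)
    rw [Real.mul_rpow hj.le (Real.exp_pos _).le, ← Real.exp_mul, one_div_mul_eq_div]
  calc (j - b) / (j + 1) * (j + 2) ^ (b + 1)
      ≤ Real.exp (-((b + 1) / (j + 1))) * ((j + 1) ^ (b + 1) * Real.exp ((b + 1) / (j + 1))) :=
        mul_le_mul hratio hpow (by positivity) (Real.exp_pos _).le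
    _ = (j + 1 : ℝ) ^ (b + 1) := by
        rw [mul_left_comm, ← Real.exp_add, neg_add_cancel, Real.exp_zero, mul_one]

/-- Up to `j ≈ b` each factor of the coefficient is at most `b / i`; beyond that the sequence on the
left decreases. -/
lemma abs_coeff_oneSubPow_mul_rpow_le {b : ℝ} (hb : 0 ≤ b) (j : ℕ) :
    |coeff j (oneSubPow b)| * (j + 1) ^ (b + 1) ≤ Real.exp b * (b + 2) ^ (b + 1) := by
  have hsmall : ∀ j : ℕ, j ≤ b + 1 →
      |coeff j (oneSubPow b)| * (j + 1) ^ (b + 1) ≤ Real.exp b * (b + 2) ^ (b + 1) := by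
    intro j hj
    have hexp := (abs_coeff_oneSubPow_le_pow_div hj).trans
      (Real.pow_div_factorial_le_exp |b| (abs_nonneg b) j)
    rw [abs_of_nonneg hb] at hexp
    exact mul_le_mul hexp (Real.rpow_le_rpow (by positivity) (by linarith) (by linarith))
      (by positivity) (Real.exp_pos _).le
  induction j with
  | zero => exact hsmall 0 (by simp only [Nat.cast_zero]; linarith)
  | succ j ih =>
    rcases le_or_gt ((j + 1 : ℕ) : ℝ) (b + 1) with hj | hj
    · exact hsmall _ hj
    · refine le_trans ?_ ih
      push_cast at hj ⊢
      have hfactor : 0 ≤ (j - b) / (j + 1) := div_nonneg (by linarith) (by positivity)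
      rw [coeff_succ_oneSubPow, abs_mul, mul_assoc, abs_of_nonneg hfactor, add_assoc,
        one_add_one_eq_two]
      exact mul_le_mul_of_nonneg_left (sub_div_mul_rpow_le (by linarith) j) (abs_nonneg _)

lemma summable_pow_div_factorial_rpow (C : ℝ) {s : ℝ} (hs : 0 < s) :
    Summable fun k : ℕ => C ^ k / (k ! : ℝ) ^ s := by
  refine summable_of_ratio_norm_eventually_le (r := 1 / 2) (by norm_num) ?_
  have hlim : Tendsto (fun k : ℕ => ((k + 1 : ℕ) : ℝ) ^ s) atTop atTop :=
    ((tendsto_rpow_atTop hs).comp tendsto_natCast_atTop_atTop).comp (tendsto_add_atTop_nat 1)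
  filter_upwards [hlim.eventually_ge_atTop (2 * |C|)] with k hk
  rw [Nat.factorial_succ, Nat.cast_mul, Real.mul_rpow (by positivity) (by positivity), pow_succ',
    mul_div_mul_comm, norm_mul]
  refine mul_le_mul_of_nonneg_right ?_ (norm_nonneg _)
  rw [norm_div, Real.norm_eq_abs, Real.norm_of_nonneg (by positivity),
    div_le_iff₀ (by positivity)]
  linarith

lemma summable_pow_div_factorial_mul_exp_mul_rpow {α C : ℝ} (h0 : 0 ≤ α) (h1 : α < 1)
    (hC : 0 ≤ C) :
    Summable fun k : ℕ => C ^ k / k ! * (Real.exp (α * k) * (α * k + 2) ^ (α * k + 1)) := by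
  refine ((summable_pow_div_factorial_rpow (2 * C * Real.exp 1 ^ 2) (sub_pos.mpr h1)).mul_left
    (2 * Real.exp 1 ^ 2)).of_nonneg_of_le (fun k => by positivity) fun k => ?_
  have hk : (0 : ℝ) < k ! := by positivity
  have hαk : α * k ≤ k := mul_le_of_le_one_left k.cast_nonneg h1.le
  have hexp : Real.exp (α * k) ≤ Real.exp 1 ^ k := by
    rw [← Real.exp_nat_mul, mul_one]
    exact Real.exp_le_exp.mpr hαk
  have hstirling : (k + 2 : ℝ) ^ k ≤ k ! * Real.exp 1 ^ (k + 2) := by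
    have h := Real.pow_div_factorial_le_exp (k + 2 : ℝ) (by positivity) k
    rw [div_le_iff₀' hk, ← mul_one ((k : ℝ) + 2), ← Nat.cast_two, ← Nat.cast_add,
      Real.exp_nat_mul, mul_one] at h
    exact_mod_cast h
  have hlinear : (k : ℝ) + 2 ≤ 2 * 2 ^ k := by
    exact_mod_cast (by have := k.lt_two_pow_self; omega : k + 2 ≤ 2 * 2 ^ k)
  have hrpow : (α * k + 2) ^ (α * k + 1) ≤
      2 * 2 ^ k * ((k ! : ℝ) ^ α * Real.exp 1 ^ (k + 2)) := by
    calc (α * k + 2) ^ (α * k + 1) ≤ (k + 2 : ℝ) ^ (α * k + 1) :=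
          Real.rpow_le_rpow (by positivity) (by linarith) (by positivity)
      _ = (k + 2) * ((k + 2 : ℝ) ^ k) ^ α := by
          rw [Real.rpow_add_one (by positivity), ← Real.rpow_natCast_mul (by positivity),
            mul_comm α, mul_comm]
      _ ≤ 2 * 2 ^ k * (k ! * Real.exp 1 ^ (k + 2)) ^ α := by gcongr
      _ ≤ 2 * 2 ^ k * ((k ! : ℝ) ^ α * Real.exp 1 ^ (k + 2)) := by
          rw [Real.mul_rpow hk.le (by positivity)]
          gcongr
          exact Real.rpow_le_self_of_one_le
            (one_le_pow₀ (Real.one_le_exp zero_le_one)) h1.le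
  calc C ^ k / k ! * (Real.exp (α * k) * (α * k + 2) ^ (α * k + 1))
      ≤ C ^ k / k ! * (Real.exp 1 ^ k * (2 * 2 ^ k * ((k ! : ℝ) ^ α * Real.exp 1 ^ (k + 2)))) := by
        gcongr
    _ = 2 * Real.exp 1 ^ 2 * ((2 * C * Real.exp 1 ^ 2) ^ k / (k ! : ℝ) ^ (1 - α)) := by
        rw [Real.rpow_sub hk, Real.rpow_one]
        field_simp
        ring

lemma tendsto_rpow_mul_coeff_oneSubPow (b : ℝ) :
    Tendsto (fun j : ℕ => (j : ℝ) ^ b * (j - b) * coeff j (oneSubPow b)) atTop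
      (𝓝 (Real.Gamma (-b))⁻¹) := by
  by_cases hG : Real.Gamma (-b) = 0
  · obtain ⟨m, hm⟩ := (Real.Gamma_eq_zero_iff _).mp hG
    rw [hG, inv_zero]
    refine tendsto_const_nhds.congr' ?_
    filter_upwards [eventually_gt_atTop m] with j hj
    rw [coeff_oneSubPow_eq_prod,
      Finset.prod_eq_zero (Finset.mem_range.mpr hj) (by simp [neg_injective hm]), mul_zero]
  · refine ((Real.GammaSeq_tendsto_Gamma (-b)).inv₀ hG).congr' ?_
    filter_upwards [eventually_gt_atTop 0] with j hj
    have hj : (0 : ℝ) < j := Nat.cast_pos.mpr hj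
    rw [Real.GammaSeq, coeff_oneSubPow_eq_prod, Finset.prod_div_distrib, Finset.prod_range_succ,
      Real.rpow_neg hj.le, ← Finset.prod_range_add_one_eq_factorial, inv_div]
    push_cast
    simp only [neg_add_eq_sub]
    have := (Real.rpow_pos_of_pos hj b).ne'
    field_simp

lemma tendsto_natCast_rpow_mul_coeff_oneSubPow_floor (b : ℝ) {t : ℝ} (ht : 0 < t) :
    Tendsto (fun N : ℕ => (N : ℝ) ^ (b + 1) * coeff ⌊N * t⌋₊ (oneSubPow b)) atTop
      (𝓝 (t ^ (-(b + 1)) * (Real.Gamma (-b))⁻¹)) := by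
  have hfloor : Tendsto (fun N : ℕ => ⌊N * t⌋₊) atTop atTop :=
    tendsto_nat_floor_atTop.comp (tendsto_natCast_atTop_atTop.atTop_mul_const ht)
  have hratio : Tendsto (fun N : ℕ => (⌊N * t⌋₊ / N : ℝ)) atTop (𝓝 t) := by
    simpa only [Function.comp_def, mul_comm] using
      (tendsto_nat_floor_mul_div_atTop ht.le).comp (tendsto_natCast_atTop_atTop (R := ℝ))
  have hratio_sub : Tendsto (fun N : ℕ => (⌊N * t⌋₊ / N - b / N : ℝ)) atTop (𝓝 t) := by
    simpa using hratio.sub (tendsto_const_div_atTop_nhds_zero_nat b)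
  have hlim := ((hratio.rpow_const (p := -b) (Or.inl ht.ne')).mul (hratio_sub.inv₀ ht.ne')).mul
    ((tendsto_rpow_mul_coeff_oneSubPow b).comp hfloor)
  rw [← Real.rpow_neg_one, ← Real.rpow_add ht, ← neg_add] at hlim
  refine hlim.congr' ?_
  filter_upwards [eventually_gt_atTop 0, hfloor.eventually_gt_atTop ⌈b⌉₊] with N hN hj
  simp only [Function.comp_apply]
  set j := ⌊N * t⌋₊
  have hN : (0 : ℝ) < N := Nat.cast_pos.mpr hN
  have hj0 : (0 : ℝ) < j := Nat.cast_pos.mpr (Nat.zero_lt_of_lt hj)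
  have hjb : (j : ℝ) - b ≠ 0 := (sub_pos.mpr (Nat.lt_of_ceil_lt hj)).ne'
  rw [← sub_div, Real.rpow_neg (by positivity), Real.div_rpow hj0.le hN.le,
    Real.rpow_add_one hN.ne']
  have := (Real.rpow_pos_of_pos hj0 b).ne'
  field_simp

lemma natCast_rpow_mul_abs_coeff_oneSubPow_floor_le {b t : ℝ} (hb : 0 ≤ b) (ht : 0 < t) (N : ℕ) :
    (N : ℝ) ^ (b + 1) * |coeff ⌊N * t⌋₊ (oneSubPow b)| ≤
      t ^ (-(b + 1)) * (Real.exp b * (b + 2) ^ (b + 1)) := by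
  have hN : (N : ℝ) ^ (b + 1) ≤ t ^ (-(b + 1)) * (⌊N * t⌋₊ + 1 : ℝ) ^ (b + 1) := by
    rw [Real.rpow_neg ht.le, ← Real.inv_rpow ht.le, ← Real.mul_rpow (by positivity) (by positivity)]
    refine Real.rpow_le_rpow (by positivity) ?_ (by linarith)
    rw [inv_mul_eq_div, le_div_iff₀ ht]
    exact (Nat.lt_floor_add_one _).le
  calc (N : ℝ) ^ (b + 1) * |coeff ⌊N * t⌋₊ (oneSubPow b)|
      ≤ t ^ (-(b + 1)) * (⌊N * t⌋₊ + 1 : ℝ) ^ (b + 1) * |coeff ⌊N * t⌋₊ (oneSubPow b)| :=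
        mul_le_mul_of_nonneg_right hN (abs_nonneg _)
    _ = t ^ (-(b + 1)) * (|coeff ⌊N * t⌋₊ (oneSubPow b)| * (⌊N * t⌋₊ + 1 : ℝ) ^ (b + 1)) := by ring
    _ ≤ t ^ (-(b + 1)) * (Real.exp b * (b + 2) ^ (b + 1)) :=
        mul_le_mul_of_nonneg_left (abs_coeff_oneSubPow_mul_rpow_le hb _) (by positivity)

lemma abs_inv_Gamma_neg_le {b : ℝ} (hb : 0 ≤ b) :
    |(Real.Gamma (-b))⁻¹| ≤ Real.exp b * (b + 2) ^ (b + 1) := by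
  have h := le_of_tendsto (tendsto_natCast_rpow_mul_coeff_oneSubPow_floor b one_pos).abs
    (Eventually.of_forall fun N => by
      rw [abs_mul, abs_of_nonneg (by positivity)]
      exact natCast_rpow_mul_abs_coeff_oneSubPow_floor_le hb one_pos N)
  simpa only [Real.one_rpow, one_mul] using h

lemma summable_wrightW_zero {α : ℝ} (h0 : 0 ≤ α) (h1 : α < 1) (z : ℝ) :
    Summable fun k : ℕ => z ^ k / (k ! * Real.Gamma (0 - α * k)) := by
  refine (summable_pow_div_factorial_mul_exp_mul_rpow h0 h1 (abs_nonneg z)).of_norm_bounded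
    fun k => ?_
  rw [zero_sub, div_mul_eq_div_div, div_eq_mul_inv _ (Real.Gamma _), norm_mul, norm_div, norm_pow,
    Real.norm_natCast, Real.norm_eq_abs, Real.norm_eq_abs]
  exact mul_le_mul_of_nonneg_left (abs_inv_Gamma_neg_le (by positivity)) (by positivity)

lemma measurable_wrightW_zero {α : ℝ} (h0 : 0 ≤ α) (h1 : α < 1) : Measurable (wrightW α 0) := by
  refine measurable_of_tendsto_metrizable (f := fun n z => ∑ k ∈ Finset.range n,
    z ^ k / (k ! * Real.Gamma (0 - α * k))) (fun n => by fun_prop) ?_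
  rw [tendsto_pi_nhds]
  exact fun z => (summable_wrightW_zero h0 h1 z).hasSum.tendsto_sum_nat

/-- The one-sided stable density of index `α ∈ (0, 1)`, with Laplace transform `exp (-l s^α)`. -/
noncomputable def stableDensity (α l t : ℝ) : ℝ := t⁻¹ * wrightW α 0 (-l * t ^ (-α))

lemma measurable_stableDensity_uncurry {α : ℝ} (h0 : 0 ≤ α) (h1 : α < 1) :
    Measurable fun q : ℝ × ℝ => stableDensity α q.1 q.2 := by
  have := measurable_wrightW_zero h0 h1
  unfold stableDensity
  fun_prop

lemma hasSum_stableDensity {α l t : ℝ} (h0 : 0 ≤ α) (h1 : α < 1) (ht : 0 < t) :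
    HasSum (fun k : ℕ => (-l) ^ k / k ! * (t ^ (-(α * k + 1)) * (Real.Gamma (-(α * k)))⁻¹))
      (stableDensity α l t) := by
  refine ((summable_wrightW_zero h0 h1 _).hasSum.mul_left t⁻¹).congr_fun fun k => ?_
  rw [neg_add, Real.rpow_add ht, Real.rpow_neg_one, ← neg_mul, Real.rpow_mul_natCast ht.le, mul_pow,
    zero_sub, neg_mul]
  field_simp

lemma tendsto_natCast_mul_stableWeight {α l t : ℝ} (h0 : 0 ≤ α) (h1 : α < 1) (hl : 0 ≤ l)
    (ht : 0 < t) :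
    Tendsto (fun N : ℕ => (N : ℝ) * stableWeight α (l * (N : ℝ) ^ α) ⌊N * t⌋₊) atTop
      (𝓝 (stableDensity α l t)) := by
  have hbound := (summable_pow_div_factorial_mul_exp_mul_rpow h0 h1
    (by positivity : (0 : ℝ) ≤ l * t ^ (-α))).mul_left t⁻¹
  have hdom := tendsto_tsum_of_dominated_convergence (𝓕 := atTop)
    (f := fun (N : ℕ) (k : ℕ) => (-l) ^ k / k ! *
      ((N : ℝ) ^ (α * k + 1) * coeff ⌊N * t⌋₊ (oneSubPow (α * k)))) hbound
    (fun k => (tendsto_natCast_rpow_mul_coeff_oneSubPow_floor (α * k) ht).const_mul _)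
    (Eventually.of_forall fun N k => by
      rw [norm_mul, norm_mul, norm_div, norm_pow, norm_neg, Real.norm_natCast,
        Real.norm_of_nonneg hl, Real.norm_of_nonneg (by positivity), Real.norm_eq_abs]
      refine (mul_le_mul_of_nonneg_left (natCast_rpow_mul_abs_coeff_oneSubPow_floor_le
        (by positivity : (0 : ℝ) ≤ α * k) ht N) (by positivity)).trans (le_of_eq ?_)
      rw [neg_add, Real.rpow_add ht, Real.rpow_neg_one, ← neg_mul, Real.rpow_mul_natCast ht.le,
        mul_pow]
      ring)
  rw [(hasSum_stableDensity h0 h1 ht).tsum_eq] at hdom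
  refine hdom.congr' ?_
  filter_upwards [eventually_gt_atTop 0] with N hN
  have hN : (0 : ℝ) < N := Nat.cast_pos.mpr hN
  rw [← (hasSum_stableWeight h0 h1.le _ _).tsum_eq, ← tsum_mul_left]
  refine tsum_congr fun k => ?_
  rw [Real.rpow_add_one hN.ne', Real.rpow_mul_natCast hN.le, ← neg_mul, mul_pow]
  ring

/-! ### Laplace bounds for stable densities and their convolutions -/

/-- The Laplace transform of `|f|` at `s`, with values in `[0, ∞]`; for `s = 0` it is the
`L¹(0, ∞)` norm. -/
noncomputable def absLaplace (f : ℝ → ℝ) (s : ℝ) : ENNReal :=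
  ∫⁻ t in Ioi 0, ‖Real.exp (-(s * t)) * f t‖ₑ

lemma setLIntegral_Ioi_comp_floor_mul_le (F : ℕ → ENNReal) {c : ℝ} (hc : 0 < c) :
    ∫⁻ t in Ioi 0, F ⌊c * t⌋₊ ≤ ∑' j, F j * ENNReal.ofReal c⁻¹ := by
  have hcover : Ioi (0 : ℝ) ⊆ ⋃ j : ℕ, Ico (j / c) ((j + 1) / c) := by
    intro t ht
    have hct : 0 ≤ c * t := (mul_pos hc ht).le
    exact mem_iUnion.mpr ⟨⌊c * t⌋₊, (div_le_iff₀' hc).mpr (Nat.floor_le hct),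
      (lt_div_iff₀' hc).mpr (Nat.lt_floor_add_one _)⟩
  have hcell : ∀ j : ℕ, ∫⁻ t in Ico (j / c) ((j + 1) / c), F ⌊c * t⌋₊ =
      F j * ENNReal.ofReal c⁻¹ := by
    intro j
    have hconst : ∀ t ∈ Ico (j / c) ((j + 1) / c), F ⌊c * t⌋₊ = F j := by
      intro t ht
      rw [(Nat.floor_eq_iff (mul_nonneg hc.le (le_trans (by positivity) ht.1))).mpr
        ⟨(div_le_iff₀' hc).mp ht.1, (lt_div_iff₀' hc).mp ht.2⟩]
    rw [setLIntegral_congr_fun measurableSet_Ico hconst, setLIntegral_const, Real.volume_Ico,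
      ← sub_div, add_sub_cancel_left, one_div]
  calc ∫⁻ t in Ioi 0, F ⌊c * t⌋₊
      ≤ ∫⁻ t in ⋃ j : ℕ, Ico (j / c) ((j + 1) / c), F ⌊c * t⌋₊ := lintegral_mono_set hcover
    _ ≤ ∑' j : ℕ, ∫⁻ t in Ico (j / c) ((j + 1) / c), F ⌊c * t⌋₊ := lintegral_iUnion_le _ _
    _ = ∑' j, F j * ENNReal.ofReal c⁻¹ := tsum_congr hcell

lemma absLaplace_stableWeight_floor_le {α L c s : ℝ} (h0 : 0 ≤ α) (h1 : α ≤ 1) (hL : 0 ≤ L)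
    (hc : 0 < c) (hs : 0 ≤ s) :
    absLaplace (fun t => c * stableWeight α L ⌊c * t⌋₊) s ≤
      ENNReal.ofReal (Real.exp (-(L * (1 - Real.exp (-(s / c))) ^ α))) := by
  set z := Real.exp (-(s / c))
  have hz : z ∈ Icc 0 1 :=
    ⟨(Real.exp_pos _).le, Real.exp_le_one_iff.mpr (neg_nonpos.mpr (by positivity))⟩
  have hw := fun j => stableWeight_nonneg h0 h1 hL j
  have hterm : ∀ j, 0 ≤ stableWeight α L j * z ^ j := fun j => mul_nonneg (hw j) (pow_nonneg hz.1 j)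
  have hdecay : ∀ t ∈ Ioi (0 : ℝ), Real.exp (-(s * t)) ≤ z ^ ⌊c * t⌋₊ := by
    intro t ht
    have hfloor := Nat.floor_le (mul_pos hc ht).le
    rw [← Real.exp_nat_mul, Real.exp_le_exp, mul_neg, neg_le_neg_iff, mul_div_left_comm]
    exact mul_le_mul_of_nonneg_left ((div_le_iff₀' hc).mpr hfloor) hs
  calc absLaplace (fun t => c * stableWeight α L ⌊c * t⌋₊) s
      ≤ ∫⁻ t in Ioi 0, ENNReal.ofReal (c * (stableWeight α L ⌊c * t⌋₊ * z ^ ⌊c * t⌋₊)) := by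
        refine setLIntegral_mono' measurableSet_Ioi fun t ht => ?_
        have hcw := mul_nonneg hc.le (hw ⌊c * t⌋₊)
        rw [Real.enorm_of_nonneg (mul_nonneg (Real.exp_pos _).le hcw)]
        refine ENNReal.ofReal_le_ofReal ?_
        rw [mul_comm, ← mul_assoc]
        exact mul_le_mul_of_nonneg_left (hdecay t ht) hcw
    _ ≤ ∑' j, ENNReal.ofReal (c * (stableWeight α L j * z ^ j)) * ENNReal.ofReal c⁻¹ :=
        setLIntegral_Ioi_comp_floor_mul_le
          (fun j => ENNReal.ofReal (c * (stableWeight α L j * z ^ j))) hc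
    _ = ∑' j, ENNReal.ofReal (stableWeight α L j * z ^ j) := by
        refine tsum_congr fun j => ?_
        rw [← ENNReal.ofReal_mul (mul_nonneg hc.le (hterm j)), mul_right_comm,
          mul_inv_cancel₀ hc.ne', one_mul]
    _ ≤ ENNReal.ofReal (Real.exp (-(L * (1 - z) ^ α))) := by
        refine ENNReal.tsum_le_of_sum_range_le fun J => ?_
        rw [← ENNReal.ofReal_sum_of_nonneg fun j _ => hterm j]
        exact ENNReal.ofReal_le_ofReal (sum_stableWeight_mul_pow_le h0 h1 hL hz J)

lemma tendsto_natCast_mul_one_sub_exp_neg_div (s : ℝ) :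
    Tendsto (fun N : ℕ => N * (1 - Real.exp (-(s / N)))) atTop (𝓝 s) := by
  have hderiv : HasDerivAt (fun u => -Real.exp (-(s * u))) s 0 := by
    simpa using ((hasDerivAt_id (0 : ℝ)).const_mul s).fun_neg.exp.fun_neg
  have hinv : Tendsto (fun N : ℕ => (N : ℝ)⁻¹) atTop (𝓝[>] 0) :=
    tendsto_inv_atTop_nhdsGT_zero.comp tendsto_natCast_atTop_atTop
  refine (hderiv.tendsto_slope_zero_right.comp hinv).congr fun N => ?_
  simp only [Function.comp_apply, zero_add, inv_inv, smul_eq_mul, mul_zero, neg_zero,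
    Real.exp_zero, div_eq_mul_inv]
  ring

lemma absLaplace_stableDensity_le {α l s : ℝ} (h0 : 0 ≤ α) (h1 : α < 1) (hl : 0 ≤ l)
    (hs : 0 ≤ s) :
    absLaplace (stableDensity α l) s ≤ ENNReal.ofReal (Real.exp (-(l * s ^ α))) := by
  set w : ℕ → ℝ → ℝ := fun N t => N * stableWeight α (l * (N : ℝ) ^ α) ⌊N * t⌋₊
  have hmeas : ∀ N, Measurable fun t => ‖Real.exp (-(s * t)) * w N t‖ₑ := by
    intro N
    have hw : Measurable (w N) := (measurable_of_countable
      fun j : ℕ => N * stableWeight α (l * (N : ℝ) ^ α) j).comp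
        (Nat.measurable_floor.comp (measurable_const_mul (N : ℝ)))
    exact ((by fun_prop : Measurable fun t => Real.exp (-(s * t))).mul hw).enorm
  have hlim : Tendsto (fun N : ℕ => ENNReal.ofReal
      (Real.exp (-(l * (N * (1 - Real.exp (-(s / N)))) ^ α)))) atTop
      (𝓝 (ENNReal.ofReal (Real.exp (-(l * s ^ α))))) :=
    ENNReal.tendsto_ofReal (((((tendsto_natCast_mul_one_sub_exp_neg_div s).rpow_const
      (Or.inr h0)).const_mul l).neg).rexp)
  calc absLaplace (stableDensity α l) s
      = ∫⁻ t in Ioi 0, liminf (fun N => ‖Real.exp (-(s * t)) * w N t‖ₑ) atTop := by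
        refine setLIntegral_congr_fun measurableSet_Ioi fun t ht => ?_
        exact (((tendsto_natCast_mul_stableWeight h0 h1 hl ht).const_mul _).enorm.liminf_eq).symm
    _ ≤ liminf (fun N => absLaplace (w N) s) atTop := lintegral_liminf_le hmeas
    _ ≤ liminf (fun N : ℕ => ENNReal.ofReal
          (Real.exp (-(l * (N * (1 - Real.exp (-(s / N)))) ^ α)))) atTop := by
        refine liminf_le_liminf ?_
        filter_upwards [eventually_gt_atTop 0] with N hN
        have hN : (0 : ℝ) < N := Nat.cast_pos.mpr hN
        rw [Real.mul_rpow hN.le (sub_nonneg.mpr (Real.exp_le_one_iff.mpr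
          (neg_nonpos.mpr (by positivity)))), ← mul_assoc]
        exact absLaplace_stableWeight_floor_le h0 h1.le (by positivity) hN hs
    _ = ENNReal.ofReal (Real.exp (-(l * s ^ α))) := hlim.liminf_eq

lemma lintegral_enorm_laplaceConv_le {f g : ℝ → ℝ} (hf : Measurable f) (hg : Measurable g) :
    ∫⁻ t in Ioi 0, ‖laplaceConv f g t‖ₑ ≤ (∫⁻ t in Ioi 0, ‖f t‖ₑ) * ∫⁻ t in Ioi 0, ‖g t‖ₑ := by
  set f' : ℝ → ENNReal := (Ioi 0).indicator fun t => ‖f t‖ₑ with hf'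
  set g' : ℝ → ENNReal := (Ici 0).indicator fun t => ‖g t‖ₑ with hg'
  have mf : Measurable f' := hf.enorm.indicator measurableSet_Ioi
  have mg : Measurable g' := hg.enorm.indicator measurableSet_Ici
  have hpt : ∀ t ∈ Ioi (0 : ℝ), ‖laplaceConv f g t‖ₑ ≤ ∫⁻ τ, f' τ * g' (t - τ) := by
    intro t ht
    rw [laplaceConv, intervalIntegral.integral_of_le (le_of_lt ht)]
    refine (enorm_integral_le_lintegral_enorm _).trans ?_
    rw [← lintegral_indicator measurableSet_Ioc]
    refine lintegral_mono (indicator_le (g := fun τ => f' τ * g' (t - τ)) fun τ hτ => ?_)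
    rw [hf', hg', indicator_of_mem (show τ ∈ Ioi (0 : ℝ) from hτ.1),
      indicator_of_mem (show t - τ ∈ Ici (0 : ℝ) from sub_nonneg.mpr hτ.2), enorm_mul]
  calc ∫⁻ t in Ioi 0, ‖laplaceConv f g t‖ₑ
      ≤ ∫⁻ t in Ioi (0 : ℝ), ∫⁻ τ, f' τ * g' (t - τ) := setLIntegral_mono' measurableSet_Ioi hpt
    _ ≤ ∫⁻ t, ∫⁻ τ, f' τ * g' (t - τ) := setLIntegral_le_lintegral _ _
    _ = ∫⁻ τ, ∫⁻ t, f' τ * g' (t - τ) := lintegral_lintegral_swap (by fun_prop)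
    _ = ∫⁻ τ, f' τ * ∫⁻ t, g' t := by
        refine lintegral_congr fun τ => ?_
        rw [lintegral_const_mul _ (by fun_prop), lintegral_sub_right_eq_self g' τ]
    _ = (∫⁻ τ, f' τ) * ∫⁻ t, g' t := lintegral_mul_const _ mf
    _ = (∫⁻ t in Ioi 0, ‖f t‖ₑ) * ∫⁻ t in Ioi 0, ‖g t‖ₑ := by
        rw [hf', hg', lintegral_indicator measurableSet_Ioi, lintegral_indicator measurableSet_Ici,
          setLIntegral_congr Ioi_ae_eq_Ici.symm]

lemma exp_neg_mul_laplaceConv (f g : ℝ → ℝ) (s t : ℝ) :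
    Real.exp (-(s * t)) * laplaceConv f g t =
      laplaceConv (fun τ => Real.exp (-(s * τ)) * f τ) (fun τ => Real.exp (-(s * τ)) * g τ) t := by
  rw [laplaceConv, laplaceConv, ← intervalIntegral.integral_const_mul]
  congr 1 with τ
  rw [mul_mul_mul_comm, ← Real.exp_add]
  ring_nf

lemma absLaplace_laplaceConv_le {f g : ℝ → ℝ} (hf : Measurable f) (hg : Measurable g) (s : ℝ) :
    absLaplace (laplaceConv f g) s ≤ absLaplace f s * absLaplace g s := by
  simp only [absLaplace, exp_neg_mul_laplaceConv]
  exact lintegral_enorm_laplaceConv_le (by fun_prop) (by fun_prop)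

lemma measurable_laplaceConv {Ω : Type*} [MeasurableSpace Ω] {F G : Ω → ℝ → ℝ}
    (hF : Measurable (Function.uncurry F)) (hG : Measurable (Function.uncurry G)) :
    Measurable (Function.uncurry fun ω => laplaceConv (F ω) (G ω)) := by
  have hint : ∀ s : Set ((Ω × ℝ) × ℝ), MeasurableSet s →
      Measurable fun q : Ω × ℝ => ∫ τ in {τ | (q, τ) ∈ s}, F q.1 τ * G q.1 (q.2 - τ) := by
    intro s hs
    have hm : Measurable fun x : (Ω × ℝ) × ℝ => F x.1.1 x.2 * G x.1.1 (x.1.2 - x.2) :=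
      (hF.comp (by fun_prop : Measurable fun x : (Ω × ℝ) × ℝ => (x.1.1, x.2))).mul
        (hG.comp (by fun_prop : Measurable fun x : (Ω × ℝ) × ℝ => (x.1.1, x.1.2 - x.2)))
    convert ((hm.indicator hs).stronglyMeasurable.integral_prod_right'
      (ν := (volume : Measure ℝ))).measurable using 2 with q
    exact (MeasureTheory.integral_indicator (measurable_prodMk_left hs)).symm
  exact (hint {x | x.2 ∈ Ioc 0 x.1.2} (by measurability)).sub
    (hint {x | x.2 ∈ Ioc x.1.2 0} (by measurability))

lemma measurable_iterConv {Ω : Type*} [MeasurableSpace Ω] {n : ℕ} {h : Fin (n + 1) → Ω → ℝ → ℝ}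
    (hm : ∀ j, Measurable (Function.uncurry (h j))) :
    Measurable (Function.uncurry fun ω => iterConv n (fun j => h j ω)) := by
  induction n with
  | zero => exact hm 0
  | succ n ih => exact measurable_laplaceConv (ih fun j => hm j.castSucc) (hm (Fin.last (n + 1)))

lemma absLaplace_iterConv_le_prod {n : ℕ} {h : Fin (n + 1) → ℝ → ℝ} (hm : ∀ j, Measurable (h j))
    (s : ℝ) : absLaplace (iterConv n h) s ≤ ∏ j, absLaplace (h j) s := by
  induction n with
  | zero => simp [iterConv]
  | succ n ih =>
    have hconv : Measurable (iterConv n fun j => h j.castSucc) :=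
      (measurable_iterConv (h := fun j (_ : Unit) => h j.castSucc)
        fun j => (hm j.castSucc).comp measurable_snd).comp (measurable_prodMk_left (x := ()))
    rw [Fin.prod_univ_castSucc]
    exact (absLaplace_laplaceConv_le hconv (hm _) s).trans
      (mul_le_mul_left (ih fun j => hm j.castSucc) _)

lemma Sconv_zero_eq_iterConv (n : ℕ) (α l : Fin (n + 1) → ℝ) :
    Sconv n 0 α l = iterConv n fun j => stableDensity (α j) (l j) := by
  simp only [Sconv, ite_self, zero_sub, Real.rpow_neg_one]
  rfl

section Sconv

variable {n : ℕ} {α l : Fin (n + 1) → ℝ}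

lemma measurable_Sconv_zero (h0 : ∀ j, 0 ≤ α j) (h1 : ∀ j, α j < 1) :
    Measurable (Function.uncurry fun p => Sconv n 0 α (fun j => l j * p)) := by
  simp only [Sconv_zero_eq_iterConv]
  refine measurable_iterConv (h := fun j p => stableDensity (α j) (l j * p)) fun j => ?_
  exact (measurable_stableDensity_uncurry (h0 j) (h1 j)).comp
    (by fun_prop : Measurable fun q : ℝ × ℝ => (l j * q.1, q.2))

lemma absLaplace_Sconv_zero_le (h0 : ∀ j, 0 ≤ α j) (h1 : ∀ j, α j < 1) (hl : ∀ j, 0 ≤ l j)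
    {s : ℝ} (hs : 0 ≤ s) :
    absLaplace (Sconv n 0 α l) s ≤ ENNReal.ofReal (Real.exp (-∑ j, l j * s ^ α j)) := by
  rw [Sconv_zero_eq_iterConv]
  calc absLaplace (iterConv n fun j => stableDensity (α j) (l j)) s
      ≤ ∏ j, absLaplace (stableDensity (α j) (l j)) s := absLaplace_iterConv_le_prod
        (fun j => (measurable_stableDensity_uncurry (h0 j) (h1 j)).comp measurable_prodMk_left) s
    _ ≤ ∏ j, ENNReal.ofReal (Real.exp (-(l j * s ^ α j))) :=
        Finset.prod_le_prod' fun j _ => absLaplace_stableDensity_le (h0 j) (h1 j) (hl j) hs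
    _ = ENNReal.ofReal (Real.exp (-∑ j, l j * s ^ α j)) := by
        rw [← ENNReal.ofReal_prod_of_nonneg fun j _ => (Real.exp_pos _).le, ← Real.exp_sum,
          Finset.sum_neg_distrib]

end Sconv

/-! ### Subordination of the heat kernel -/

/-- The fundamental solution of the heat equation `∂ₚu = ∂ₓ²u` on the line. -/
noncomputable def heatKernel (x p : ℝ) : ℝ :=
  (4 * π) ^ (-(1 / 2 : ℝ)) * (p ^ (-(1 / 2 : ℝ)) * Real.exp (-(x ^ 2) / (4 * p)))

/-- The spatial derivative of `heatKernel`. -/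
noncomputable def heatKernelDeriv (x p : ℝ) : ℝ :=
  -(x / (2 * p)) * heatKernel x p

lemma hasDerivAt_heatKernel (x p : ℝ) :
    HasDerivAt (fun x => heatKernel x p) (heatKernelDeriv x p) x := by
  have hexponent : HasDerivAt (fun x : ℝ => -(x ^ 2) / (4 * p)) (-(2 * x) / (4 * p)) x := by
    simpa using (hasDerivAt_pow 2 x).fun_neg.div_const (4 * p)
  refine ((hexponent.exp.const_mul (p ^ (-(1 / 2 : ℝ)))).const_mul
    ((4 * π) ^ (-(1 / 2 : ℝ)))).congr_deriv ?_
  rw [heatKernelDeriv, heatKernel]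
  ring

@[fun_prop]
lemma measurable_heatKernel (x : ℝ) : Measurable (heatKernel x) := by
  unfold heatKernel
  fun_prop

@[fun_prop]
lemma measurable_heatKernelDeriv (x : ℝ) : Measurable (heatKernelDeriv x) := by
  unfold heatKernelDeriv
  fun_prop

lemma abs_heatKernelDeriv {p : ℝ} (hp : 0 < p) (x : ℝ) :
    |heatKernelDeriv x p| = (4 * π) ^ (-(1 / 2 : ℝ)) * (|x| / 2) *
      (p ^ (-(1 / 2 : ℝ) - 1) * Real.exp (-(x ^ 2 / 4 / p))) := by
  have hkernel : 0 ≤ heatKernel x p := by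
    rw [heatKernel]
    positivity
  rw [heatKernelDeriv, abs_mul, abs_neg, abs_div, abs_of_pos (by positivity : 0 < 2 * p),
    abs_of_nonneg hkernel, heatKernel, Real.rpow_sub_one hp.ne', neg_div, div_div]
  ring

lemma abs_heatKernelDeriv_le {C p y z : ℝ} (hp : 0 < p) (hyz : |y| ≤ |z|) (hzy : |z| ≤ C * |y|) :
    |heatKernelDeriv z p| ≤ C * |heatKernelDeriv y p| := by
  have hsq : y ^ 2 ≤ z ^ 2 := sq_le_sq.mpr hyz
  rw [abs_heatKernelDeriv hp, abs_heatKernelDeriv hp]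
  calc (4 * π) ^ (-(1 / 2 : ℝ)) * (|z| / 2) *
        (p ^ (-(1 / 2 : ℝ) - 1) * Real.exp (-(z ^ 2 / 4 / p)))
      ≤ (4 * π) ^ (-(1 / 2 : ℝ)) * (C * |y| / 2) *
        (p ^ (-(1 / 2 : ℝ) - 1) * Real.exp (-(y ^ 2 / 4 / p))) := by
        have hC : 0 ≤ C * |y| := (abs_nonneg z).trans hzy
        gcongr
    _ = _ := by ring

section InverseGamma

variable {a c : ℝ}

lemma rpow_mul_exp_neg_div_eq_comp_inv (a c : ℝ) {p : ℝ} (hp : 0 < p) :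
    (|(-1 : ℝ)| * p ^ (-1 - 1 : ℝ)) •
        ((p ^ (-1 : ℝ)) ^ (a - 1) * Real.exp (-(c * p ^ (-1 : ℝ)))) =
      p ^ (-a - 1) * Real.exp (-(c / p)) := by
  rw [abs_neg, abs_one, one_mul, smul_eq_mul, ← mul_assoc, ← Real.rpow_mul hp.le,
    ← Real.rpow_add hp, Real.rpow_neg_one, div_eq_mul_inv]
  ring_nf

lemma integrableOn_rpow_mul_exp_neg_mul (ha : 0 < a) (hc : 0 < c) :
    IntegrableOn (fun u : ℝ => u ^ (a - 1) * Real.exp (-(c * u))) (Ioi 0) := by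
  simpa only [Real.rpow_one, neg_mul] using
    integrableOn_rpow_mul_exp_neg_mul_rpow (by linarith : -1 < a - 1) one_pos hc

lemma integrableOn_rpow_mul_exp_neg_div (ha : 0 < a) (hc : 0 < c) :
    IntegrableOn (fun p : ℝ => p ^ (-a - 1) * Real.exp (-(c / p))) (Ioi 0) :=
  ((integrableOn_Ioi_comp_rpow_iff _ (by norm_num : (-1 : ℝ) ≠ 0)).mpr
    (integrableOn_rpow_mul_exp_neg_mul ha hc)).congr_fun
      (fun _ hp => rpow_mul_exp_neg_div_eq_comp_inv a c hp) measurableSet_Ioi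

lemma integral_rpow_mul_exp_neg_div (ha : 0 < a) (hc : 0 < c) :
    ∫ p in Ioi 0, p ^ (-a - 1) * Real.exp (-(c / p)) = (1 / c) ^ a * Real.Gamma a := by
  rw [← Real.integral_rpow_mul_exp_neg_mul_Ioi ha hc,
    ← integral_comp_rpow_Ioi (fun u => u ^ (a - 1) * Real.exp (-(c * u)))
      (by norm_num : (-1 : ℝ) ≠ 0)]
  exact setIntegral_congr_fun measurableSet_Ioi
    fun p hp => (rpow_mul_exp_neg_div_eq_comp_inv a c hp).symm

end InverseGamma

lemma integrableOn_heatKernelDeriv (x : ℝ) : IntegrableOn (heatKernelDeriv x) (Ioi 0) := by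
  rcases eq_or_ne x 0 with rfl | hx
  · exact integrableOn_zero.congr_fun (fun p _ => by simp [heatKernelDeriv]) measurableSet_Ioi
  refine (((integrableOn_rpow_mul_exp_neg_div one_half_pos
    (by positivity : 0 < x ^ 2 / 4)).const_mul ((4 * π) ^ (-(1 / 2 : ℝ)) * (|x| / 2))).mono'
      (by fun_prop) ?_)
  filter_upwards [ae_restrict_mem measurableSet_Ioi] with p hp
  exact (abs_heatKernelDeriv hp x).le

lemma integral_abs_heatKernelDeriv {x : ℝ} (hx : x ≠ 0) :
    ∫ p in Ioi 0, |heatKernelDeriv x p| = 1 / 2 := by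
  have hscale : (4 * π) ^ (-(1 / 2 : ℝ)) = (2 * √π)⁻¹ := by
    rw [Real.rpow_neg (by positivity), ← Real.sqrt_eq_rpow, Real.sqrt_mul zero_le_four,
      show (4 : ℝ) = 2 ^ 2 by norm_num, Real.sqrt_sq zero_le_two]
  have hroot : (1 / (x ^ 2 / 4)) ^ (1 / 2 : ℝ) = 2 / |x| := by
    rw [← Real.sqrt_eq_rpow, show 1 / (x ^ 2 / 4) = (2 / x) ^ 2 by field_simp; norm_num,
      Real.sqrt_sq_eq_abs, abs_div, abs_two]
  have hπ : √π ≠ 0 := (Real.sqrt_pos.mpr Real.pi_pos).ne'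
  rw [setIntegral_congr_fun measurableSet_Ioi fun p hp => abs_heatKernelDeriv hp x,
    MeasureTheory.integral_const_mul, integral_rpow_mul_exp_neg_div one_half_pos (by positivity),
    hscale, hroot, Real.Gamma_one_half_eq]
  field_simp

lemma lintegral_enorm_heatKernelDeriv {x : ℝ} (hx : x ≠ 0) :
    ∫⁻ p in Ioi 0, ‖heatKernelDeriv x p‖ₑ = ENNReal.ofReal (1 / 2) := by
  rw [← integral_abs_heatKernelDeriv hx]
  exact (ofReal_integral_norm_eq_lintegral_enorm (integrableOn_heatKernelDeriv x)).symm

lemma integrableOn_heatKernel_mul_exp_neg (x : ℝ) {c : ℝ} (hc : 0 < c) :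
    IntegrableOn (fun p => heatKernel x p * Real.exp (-(c * p))) (Ioi 0) := by
  refine ((integrableOn_rpow_mul_exp_neg_mul one_half_pos hc).const_mul
    ((4 * π) ^ (-(1 / 2 : ℝ)))).mono' (by fun_prop) ?_
  filter_upwards [ae_restrict_mem measurableSet_Ioi] with p hp
  have hp : 0 < p := hp
  have hgauss : Real.exp (-(x ^ 2) / (4 * p)) ≤ 1 := by
    rw [Real.exp_le_one_iff, neg_div]
    exact neg_nonpos.mpr (by positivity)
  rw [heatKernel, Real.norm_of_nonneg (by positivity), mul_assoc, mul_assoc,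
    show (1 / 2 - 1 : ℝ) = -(1 / 2) by norm_num]
  gcongr
  exact mul_le_of_le_one_left (Real.exp_pos _).le hgauss

/-- The average `∫₀^∞ w(p) S(p, ·) dp` of the family `S` against the weight `w`. -/
noncomputable def subordination (S : ℝ → ℝ → ℝ) (w : ℝ → ℝ) (t : ℝ) : ℝ :=
  ∫ p in Ioi 0, w p * S p t

section Subordination

variable {S : ℝ → ℝ → ℝ} {w : ℝ → ℝ} {s : ℝ}

lemma lintegral_prod_enorm_exp_neg_mul (hS : Measurable (Function.uncurry S)) (hw : Measurable w)
    (s : ℝ) :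
    ∫⁻ q, ‖Real.exp (-(s * q.2)) * (w q.1 * S q.1 q.2)‖ₑ
        ∂(volume.restrict (Ioi 0)).prod (volume.restrict (Ioi 0)) =
      ∫⁻ p in Ioi 0, ‖w p‖ₑ * absLaplace (S p) s := by
  have hS' : Measurable fun q : ℝ × ℝ => S q.1 q.2 := hS
  rw [lintegral_prod _ (by fun_prop)]
  refine lintegral_congr fun p => ?_
  rw [absLaplace, ← lintegral_const_mul' _ _ enorm_ne_top]
  simp only [enorm_mul, mul_left_comm]

lemma absLaplace_subordination_le (hS : Measurable (Function.uncurry S)) (hw : Measurable w)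
    (s : ℝ) :
    absLaplace (subordination S w) s ≤ ∫⁻ p in Ioi 0, ‖w p‖ₑ * absLaplace (S p) s := by
  have hS' : Measurable fun q : ℝ × ℝ => S q.1 q.2 := hS
  rw [← lintegral_prod_enorm_exp_neg_mul hS hw, lintegral_prod_symm _ (by fun_prop)]
  refine lintegral_mono fun t => ?_
  rw [subordination, ← MeasureTheory.integral_const_mul]
  exact enorm_integral_le_lintegral_enorm _

lemma integrable_prod_exp_neg_mul (hS : Measurable (Function.uncurry S)) (hw : Measurable w)
    (hfin : ∫⁻ p in Ioi 0, ‖w p‖ₑ * absLaplace (S p) s < ⊤) :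
    Integrable (fun q : ℝ × ℝ => Real.exp (-(s * q.2)) * (w q.1 * S q.1 q.2))
      ((volume.restrict (Ioi 0)).prod (volume.restrict (Ioi 0))) := by
  have hS' : Measurable fun q : ℝ × ℝ => S q.1 q.2 := hS
  exact ⟨by fun_prop, (lintegral_prod_enorm_exp_neg_mul hS hw s).trans_lt hfin⟩

lemma ae_integrableOn_mul (hS : Measurable (Function.uncurry S)) (hw : Measurable w)
    (hfin : ∫⁻ p in Ioi 0, ‖w p‖ₑ * absLaplace (S p) s < ⊤) :
    ∀ᵐ t ∂volume.restrict (Ioi 0), IntegrableOn (fun p => w p * S p t) (Ioi 0) := by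
  filter_upwards [(integrable_prod_exp_neg_mul hS hw hfin).prod_left_ae] with t ht
  exact (integrable_const_mul_iff (Real.exp_pos _).ne'.isUnit _).mp ht

lemma hasDerivAt_subordination_heatKernel {t y : ℝ} (hy : y ≠ 0)
    (hS : Measurable fun p => S p t)
    (hint : IntegrableOn (fun p => heatKernel y p * S p t) (Ioi 0))
    (hint' : IntegrableOn (fun p => heatKernelDeriv (y / 2) p * S p t) (Ioi 0)) :
    HasDerivAt (fun z => subordination S (heatKernel z) t)
      (subordination S (heatKernelDeriv y) t) y := by
  have hdom : ∀ p ∈ Ioi (0 : ℝ), ∀ z ∈ Metric.ball y (|y| / 2),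
      ‖heatKernelDeriv z p * S p t‖ ≤ 3 * ‖heatKernelDeriv (y / 2) p * S p t‖ := by
    intro p hp z hz
    rw [Metric.mem_ball, Real.dist_eq] at hz
    have hzy := abs_sub_abs_le_abs_sub z y
    have hyz := abs_sub_abs_le_abs_sub y z
    rw [abs_sub_comm y z] at hyz
    have hhalf : |y / 2| = |y| / 2 := by rw [abs_div, abs_two]
    rw [norm_mul, norm_mul, ← mul_assoc]
    exact mul_le_mul_of_nonneg_right
      (abs_heatKernelDeriv_le hp (by linarith) (by linarith)) (norm_nonneg _)
  exact (_root_.hasDerivAt_integral_of_dominated_loc_of_deriv_le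
    (F := fun z p => heatKernel z p * S p t) (F' := fun z p => heatKernelDeriv z p * S p t)
    (Metric.ball_mem_nhds y (by positivity)) (Eventually.of_forall fun z => by fun_prop) hint
    (by fun_prop) (ae_restrict_of_forall_mem measurableSet_Ioi hdom) (hint'.norm.const_mul 3)
    (Eventually.of_forall fun p z _ => (hasDerivAt_heatKernel z p).mul_const (S p t))).2

end Subordination

lemma ae_hasDerivAt_subordination_heatKernel {S : ℝ → ℝ → ℝ} {c y : ℝ}
    (hS : Measurable (Function.uncurry S)) (hc : 0 < c) (hy : y ≠ 0)
    (hmass : ∀ p, 0 < p → absLaplace (S p) 0 ≤ 1)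
    (hdecay : ∀ p, 0 < p → absLaplace (S p) 1 ≤ ENNReal.ofReal (Real.exp (-(c * p)))) :
    ∀ᵐ t ∂volume.restrict (Ioi 0), HasDerivAt (fun z => subordination S (heatKernel z) t)
      (subordination S (heatKernelDeriv y) t) y := by
  -- `heatKernel y` is not integrable on `(0, ∞)`; the factor `exp (-t)` brings the decay in `p`.
  have hkernel : ∫⁻ p in Ioi 0, ‖heatKernel y p‖ₑ * absLaplace (S p) 1 < ⊤ := by
    refine lt_of_le_of_lt (setLIntegral_mono' measurableSet_Ioi fun p hp => ?_)
      (integrableOn_heatKernel_mul_exp_neg y hc).hasFiniteIntegral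
    rw [enorm_mul, Real.enorm_of_nonneg (Real.exp_pos _).le]
    exact mul_le_mul_right (hdecay p hp) _
  have hderiv : ∫⁻ p in Ioi 0, ‖heatKernelDeriv (y / 2) p‖ₑ * absLaplace (S p) 0 < ⊤ :=
    lt_of_le_of_lt (setLIntegral_mono' measurableSet_Ioi
      fun p hp => mul_le_of_le_one_right zero_le (hmass p hp))
      (integrableOn_heatKernelDeriv (y / 2)).hasFiniteIntegral
  filter_upwards [ae_integrableOn_mul hS (measurable_heatKernel y) hkernel,
    ae_integrableOn_mul hS (measurable_heatKernelDeriv (y / 2)) hderiv] with t hint hint'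
  exact hasDerivAt_subordination_heatKernel hy (hS.comp measurable_prodMk_right) hint hint'

lemma kerE_eq_subordination (m : ℕ) (α lam : Fin (m + 1) → ℝ) (x t : ℝ) :
    kerE m α lam x t =
      subordination (fun p => Sconv m 0 α fun j => lam j * p) (heatKernel x) t := by
  simp only [kerE, Gam1, subordination, heatKernel, sq_abs, mul_assoc,
    MeasureTheory.integral_const_mul]

/-! ### The kernel `E_x` -/

section KernelDerivative

variable {m : ℕ} {α lam : Fin (m + 1) → ℝ} {y : ℝ}

lemma absLaplace_Sconv_zero_mul_le (h0 : ∀ j, 0 ≤ α j) (h1 : ∀ j, α j < 1) (hlam : ∀ j, 0 ≤ lam j)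
    {p s : ℝ} (hp : 0 ≤ p) (hs : 0 ≤ s) :
    absLaplace (Sconv m 0 α fun j => lam j * p) s ≤
      ENNReal.ofReal (Real.exp (-((∑ j, lam j * s ^ α j) * p))) := by
  simpa only [mul_right_comm _ p, ← Finset.sum_mul] using
    absLaplace_Sconv_zero_le h0 h1 (fun j => mul_nonneg (hlam j) hp) hs

lemma absLaplace_Sconv_zero_mul_le_one (h0 : ∀ j, 0 ≤ α j) (h1 : ∀ j, α j < 1)
    (hlam : ∀ j, 0 ≤ lam j) {p : ℝ} (hp : 0 ≤ p) :
    absLaplace (Sconv m 0 α fun j => lam j * p) 0 ≤ 1 := by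
  refine (absLaplace_Sconv_zero_mul_le h0 h1 hlam hp le_rfl).trans ?_
  rw [ENNReal.ofReal_le_one, Real.exp_le_one_iff, neg_nonpos]
  exact mul_nonneg
    (Finset.sum_nonneg fun j _ => mul_nonneg (hlam j) (Real.rpow_nonneg le_rfl _)) hp

lemma ae_kerEx_eq_subordination (h0 : ∀ j, 0 ≤ α j) (h1 : ∀ j, α j < 1) (hlam : ∀ j, 0 < lam j)
    (hy : y ≠ 0) :
    ∀ᵐ t ∂volume.restrict (Ioi 0), kerEx m α lam y t =
      subordination (fun p => Sconv m 0 α fun j => lam j * p) (heatKernelDeriv y) t := by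
  have hdecay : ∀ p, 0 < p → absLaplace (Sconv m 0 α fun j => lam j * p) 1 ≤
      ENNReal.ofReal (Real.exp (-((∑ j, lam j) * p))) := fun p hp => by
    simpa only [Real.one_rpow, mul_one] using
      absLaplace_Sconv_zero_mul_le h0 h1 (hlam · |>.le) hp.le zero_le_one
  filter_upwards [ae_hasDerivAt_subordination_heatKernel
    (measurable_Sconv_zero h0 h1)
    (Finset.sum_pos (fun j _ => hlam j) Finset.univ_nonempty) hy
    (fun p hp => absLaplace_Sconv_zero_mul_le_one h0 h1 (hlam · |>.le) hp.le)
    hdecay] with t ht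
  simp only [kerEx, kerE_eq_subordination, ht.deriv]

lemma lintegral_enorm_kerEx_le (h0 : ∀ j, 0 ≤ α j) (h1 : ∀ j, α j < 1) (hlam : ∀ j, 0 < lam j)
    (hy : y ≠ 0) :
    ∫⁻ t in Ioi 0, ‖kerEx m α lam y t‖ₑ ≤ ENNReal.ofReal (1 / 2) := by
  set S := fun p => Sconv m 0 α fun j => lam j * p
  calc ∫⁻ t in Ioi 0, ‖kerEx m α lam y t‖ₑ
      = absLaplace (subordination S (heatKernelDeriv y)) 0 := by
        rw [absLaplace]
        refine lintegral_congr_ae ?_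
        filter_upwards [ae_kerEx_eq_subordination h0 h1 hlam hy] with t ht
        rw [ht, zero_mul, neg_zero, Real.exp_zero, one_mul]
    _ ≤ ∫⁻ p in Ioi 0, ‖heatKernelDeriv y p‖ₑ * absLaplace (S p) 0 :=
        absLaplace_subordination_le (measurable_Sconv_zero h0 h1)
          (measurable_heatKernelDeriv y) 0
    _ ≤ ∫⁻ p in Ioi 0, ‖heatKernelDeriv y p‖ₑ :=
        setLIntegral_mono' measurableSet_Ioi fun p hp => mul_le_of_le_one_right zero_le
          (absLaplace_Sconv_zero_mul_le_one h0 h1 (hlam · |>.le) (le_of_lt hp))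
    _ = ENNReal.ofReal (1 / 2) := lintegral_enorm_heatKernelDeriv hy

lemma integrableOn_kerEx (h0 : ∀ j, 0 ≤ α j) (h1 : ∀ j, α j < 1) (hlam : ∀ j, 0 < lam j)
    (hy : y ≠ 0) : IntegrableOn (kerEx m α lam y) (Ioi 0) := by
  have hS := measurable_Sconv_zero (l := lam) h0 h1
  have hmeas : AEStronglyMeasurable
      (subordination (fun p => Sconv m 0 α fun j => lam j * p) (heatKernelDeriv y))
      (volume.restrict (Ioi 0)) :=
    (((measurable_heatKernelDeriv y).comp measurable_snd).mul
      (hS.comp measurable_swap)).stronglyMeasurable.integral_prod_right'.aestronglyMeasurable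
  exact ⟨hmeas.congr (EventuallyEq.symm (ae_kerEx_eq_subordination h0 h1 hlam hy)),
    (lintegral_enorm_kerEx_le h0 h1 hlam hy).trans_lt ENNReal.ofReal_lt_top⟩

lemma integral_abs_kerEx_le (h0 : ∀ j, 0 ≤ α j) (h1 : ∀ j, α j < 1) (hlam : ∀ j, 0 < lam j)
    (hy : y ≠ 0) : ∫ t in Ioi 0, |kerEx m α lam y t| ≤ 1 / 2 := by
  rw [← ENNReal.ofReal_le_ofReal_iff one_half_pos.le]
  exact (ofReal_integral_norm_eq_lintegral_enorm (integrableOn_kerEx h0 h1 hlam hy)).trans_le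
    (lintegral_enorm_kerEx_le h0 h1 hlam hy)

end KernelDerivative

theorem truncated_layer_L1_bound_general {m : ℕ} {α lam : Fin (m + 1) → ℝ}
    (hnonneg : ∀ j, 0 ≤ α j) (hlt1 : ∀ j, α j < 1) (hlam : ∀ j, 0 < lam j)
    {a δ x : ℝ} (t : ℝ) (hδ : 0 ≤ δ) (hx : x ≠ a) :
    IntervalIntegrable (fun τ => kerEx m α lam (x - a) (t - τ)) volume (t - δ) t ∧
      ∫ τ in (t - δ)..t, |kerEx m α lam (x - a) (t - τ)| ≤ 1 / 2 := by
  have hy : x - a ≠ 0 := sub_ne_zero.mpr hx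
  have hint := integrableOn_kerEx hnonneg hlt1 hlam hy
  refine ⟨?_, ?_⟩
  · have hδint : IntervalIntegrable (kerEx m α lam (x - a)) volume 0 δ :=
      (intervalIntegrable_iff_integrableOn_Ioc_of_le hδ).mpr (hint.mono_set Ioc_subset_Ioi_self)
    simpa only [sub_zero] using (hδint.comp_sub_left t).symm
  calc ∫ τ in (t - δ)..t, |kerEx m α lam (x - a) (t - τ)|
      = ∫ s in Ioc 0 δ, |kerEx m α lam (x - a) s| := by
        rw [intervalIntegral.integral_comp_sub_left (fun s => |kerEx m α lam (x - a) s|) t,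
          sub_self, sub_sub_cancel, intervalIntegral.integral_of_le hδ]
    _ ≤ ∫ s in Ioi 0, |kerEx m α lam (x - a) s| :=
        setIntegral_mono_set hint.abs (Eventually.of_forall fun s => abs_nonneg _)
          Ioc_subset_Ioi_self.eventuallyLE
    _ ≤ 1 / 2 := integral_abs_kerEx_le hnonneg hlt1 hlam hy

/-- Uniform `L¹` bound for the truncated single-layer integral of `E_x`:
`∫_{t-δ}^t |E_x(x-a, t-τ)| dτ ≤ 1/2`. -/
theorem truncated_layer_L1_bound
    (m : ℕ) (α lam : Fin (m + 1) → ℝ)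
    (hmono : StrictMono α) (hpos : ∀ j, 0 < α j) (hlt1 : ∀ j, α j < 1)
    (hlam : ∀ j, 0 < lam j)
    (a t δ : ℝ) (ht : 0 < t) (hδ : δ ∈ Set.Ioo 0 t)
    (x : ℝ) (hx : x ≠ a) :
    ∫ τ in (t - δ)..t, |kerEx m α lam (x - a) (t - τ)| ≤ 1/2 :=
  (truncated_layer_L1_bound_general (hpos · |>.le) hlt1 hlam t hδ.1.le hx).2
end

section
/- Integral representation of the spatial derivative of E: For every x ∈ ℝ with x ≠ 0 and every t > 0, the kernel E is differentiable in x at (x,t) and E_x(x,t) = −(x/2) (4π)^{−1/2} ∫₀^∞ p^{−3/2} exp(−x²/(4p)) S⁰_m(t;−λ₁p,…,−λ_m p;−α₁,…,−α_m) dp. -/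
open MeasureTheory Real Filter Set Topology intervalIntegral

/-!
For `δ < 1` and `z > 0`, Hankel's integral for `1 / Γ` along the ray `arg ζ = φ`, with `φ > π / 2`
and `α φ < π / 2`, gives `W(-z; -α, δ) = π⁻¹ Im ∫ ζ ^ (-δ) e ^ (ζ - z ζ ^ α) dζ`, hence
`|W(-z; -α, δ)| ≤ C z ^ (-(1 - δ) / α)`. At `z = ℓ p t ^ (-α)` the power of `t` in this bound
cancels `t ^ (δ - 1)`, so every factor of the convolution is `O(p ^ (-(1 - δ) / α))` uniformly in
`t`, and `S^μ_m = O(p ^ (-M))` with `M = ∑ (1 - μ_j) / α_j`. For `x ≠ 0` the Gaussian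
`e ^ (-x² / (4p))` absorbs every negative power of `p` at the origin, and `M > 1 / 2` provides the
integrability at infinity, so one may differentiate under the integral sign.
-/

section HankelRay

/-- The measure `u ^ (s - 1) du` on `(0, ∞)`, whose complex moment generating function is
`Γ(s) (-z) ^ (-s)` on the left half-plane. -/
noncomputable def rpowMeasure (s : ℝ) : Measure ℝ :=
  (volume.restrict (Ioi 0)).withDensity fun u => ENNReal.ofReal (u ^ (s - 1))

lemma integral_rpowMeasure {E : Type*} [NormedAddCommGroup E] [NormedSpace ℝ E] (s : ℝ)
    (f : ℝ → E) : ∫ u, f u ∂rpowMeasure s = ∫ u in Ioi 0, u ^ (s - 1) • f u := by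
  rw [rpowMeasure, integral_withDensity_eq_integral_toReal_smul (by fun_prop) (by simp)]
  refine setIntegral_congr_fun measurableSet_Ioi fun u hu => ?_
  simp only [ENNReal.toReal_ofReal (rpow_nonneg (le_of_lt hu) _)]

lemma Iio_subset_integrableExpSet_rpowMeasure {s : ℝ} (hs : 0 < s) :
    Iio 0 ⊆ ProbabilityTheory.integrableExpSet id (rpowMeasure s) := by
  intro c hc
  have hint : IntegrableOn (fun u : ℝ => u ^ (s - 1) * rexp (-(-c) * u ^ (1 : ℝ))) (Ioi 0) :=
    integrableOn_rpow_mul_exp_neg_mul_rpow (by linarith) one_pos (neg_pos.2 hc)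
  rw [ProbabilityTheory.integrableExpSet, mem_ofPred_eq, rpowMeasure,
    integrable_withDensity_iff_integrable_smul' (by fun_prop) (by simp)]
  refine hint.congr_fun (fun u hu => ?_) measurableSet_Ioi
  simp [ENNReal.toReal_ofReal (rpow_nonneg (le_of_lt hu) _)]

lemma mgf_rpowMeasure {s : ℝ} (hs : 0 < s) {c : ℝ} (hc : c < 0) :
    ProbabilityTheory.mgf id (rpowMeasure s) c = (-c) ^ (-s) * Gamma s := by
  rw [ProbabilityTheory.mgf, integral_rpowMeasure, rpow_neg (neg_pos.2 hc).le,
    ← inv_rpow (neg_pos.2 hc).le, ← one_div,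
    ← integral_rpow_mul_exp_neg_mul_Ioi hs (neg_pos.2 hc)]
  simp

-- Both sides are holomorphic on the left half-plane and agree on the negative half-line.
lemma complexMGF_rpowMeasure {s : ℝ} (hs : 0 < s) {z : ℂ} (hz : z.re < 0) :
    ProbabilityTheory.complexMGF id (rpowMeasure s) z = (-z) ^ (-s : ℂ) * Gamma s := by
  have hleft : AnalyticOnNhd ℂ (ProbabilityTheory.complexMGF id (rpowMeasure s)) {z | z.re < 0} :=
    ProbabilityTheory.analyticOnNhd_complexMGF.mono fun z hz =>
      interior_maximal (Iio_subset_integrableExpSet_rpowMeasure hs) isOpen_Iio hz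
  have hright : AnalyticOnNhd ℂ (fun z : ℂ => (-z) ^ (-s : ℂ) * Gamma s) {z | z.re < 0} :=
    fun z hz => (analyticAt_id.neg.cpow analyticAt_const
      (Or.inl (by simpa using hz))).mul analyticAt_const
  refine hleft.eqOn_of_preconnected_of_frequently_eq hright
    (convex_halfSpace_re_lt 0).isPreconnected (z₀ := ((-1 : ℝ) : ℂ)) (by simp) ?_ hz
  have htend : Tendsto ((↑) : ℝ → ℂ) (𝓝[<] (-1)) (𝓝[≠] ((-1 : ℝ) : ℂ)) :=
    Complex.continuous_ofReal.continuousWithinAt.tendsto_nhdsWithin fun _ hc =>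
      Complex.ofReal_injective.ne (ne_of_lt hc)
  refine htend.frequently (Eventually.frequently ?_)
  filter_upwards [self_mem_nhdsWithin] with c hc
  have hc0 : c < 0 := lt_trans hc (by norm_num)
  rw [ProbabilityTheory.complexMGF_ofReal, mgf_rpowMeasure hs hc0]
  push_cast [Complex.ofReal_cpow (neg_pos.2 hc0).le]
  rfl

/-- The integrand `ζ ^ (s - 1) e ^ ζ dζ` of Hankel's contour integral for the reciprocal Gamma
function, parametrised by `u > 0` along the ray `ζ = u e ^ (iφ)`; the branch of the power is the
one given by the argument `φ`, which may exceed `π`. -/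
noncomputable def hankelIntegrand (φ s u : ℝ) : ℂ :=
  Complex.exp ((s * φ : ℝ) * Complex.I) * (u ^ (s - 1) : ℝ) *
    Complex.exp (u * Complex.exp (φ * Complex.I))

lemma measurable_hankelIntegrand (φ s : ℝ) : Measurable (hankelIntegrand φ s) := by
  unfold hankelIntegrand
  fun_prop

lemma norm_hankelIntegrand (φ s : ℝ) {u : ℝ} (hu : 0 ≤ u) :
    ‖hankelIntegrand φ s u‖ = u ^ (s - 1) * rexp (Real.cos φ * u) := by
  rw [hankelIntegrand, norm_mul, norm_mul, Complex.norm_exp_ofReal_mul_I,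
    one_mul, Complex.norm_of_nonneg (rpow_nonneg hu _), Complex.norm_exp, Complex.re_ofReal_mul,
    Complex.exp_ofReal_mul_I_re, mul_comm u]

lemma hankelIntegrand_add_mul_natCast (φ s α : ℝ) (k : ℕ) {u : ℝ} (hu : 0 < u) :
    hankelIntegrand φ (s + α * k) u =
      hankelIntegrand φ s u * ((u ^ α : ℝ) * Complex.exp ((α * φ : ℝ) * Complex.I)) ^ k := by
  have hphase : Complex.exp (((s + α * k) * φ : ℝ) * Complex.I) =
      Complex.exp ((s * φ : ℝ) * Complex.I) * Complex.exp ((α * φ : ℝ) * Complex.I) ^ k := by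
    rw [← Complex.exp_nat_mul, ← Complex.exp_add]
    push_cast
    ring_nf
  have hpow : u ^ (s + α * k - 1) = u ^ (s - 1) * (u ^ α) ^ k := by
    rw [← rpow_mul_natCast hu.le, ← rpow_add hu]
    ring_nf
  rw [hankelIntegrand, hankelIntegrand, hphase, hpow]
  push_cast
  ring

lemma cos_neg_of_mem_Ioo {φ : ℝ} (hφ : φ ∈ Ioo (π / 2) (3 * π / 2)) : Real.cos φ < 0 :=
  cos_neg_of_pi_div_two_lt_of_lt hφ.1 (by linarith [hφ.2])

lemma integral_hankelIntegrand {φ s : ℝ} (hφ : φ ∈ Ioo (π / 2) (3 * π / 2)) (hs : 0 < s) :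
    ∫ u in Ioi 0, hankelIntegrand φ s u = Gamma s * Complex.exp ((π * s : ℝ) * Complex.I) := by
  have hre : (Complex.exp (φ * Complex.I)).re < 0 := by
    rw [Complex.exp_ofReal_mul_I_re]
    exact cos_neg_of_mem_Ioo hφ
  have hlog : Complex.log (-Complex.exp (φ * Complex.I)) = (φ - π) * Complex.I := by
    rw [← Complex.log_exp (x := (φ - π) * Complex.I), sub_mul, Complex.exp_sub,
      Complex.exp_pi_mul_I, div_neg, div_one]
    all_goals simp; linarith [pi_pos, hφ.1, hφ.2]
  have hmgf := complexMGF_rpowMeasure hs hre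
  rw [ProbabilityTheory.complexMGF, integral_rpowMeasure,
    Complex.cpow_def_of_ne_zero (neg_ne_zero.2 (Complex.exp_ne_zero _)), hlog] at hmgf
  calc ∫ u in Ioi 0, hankelIntegrand φ s u
      = Complex.exp ((s * φ : ℝ) * Complex.I) * ∫ u in Ioi 0, (u ^ (s - 1)) •
          Complex.exp (Complex.exp (φ * Complex.I) * (id u : ℝ)) := by
        rw [← MeasureTheory.integral_const_mul]
        congr 1 with u
        rw [hankelIntegrand, Complex.real_smul, mul_assoc, id, mul_comm (u : ℂ)]
    _ = Gamma s * Complex.exp ((π * s : ℝ) * Complex.I) := by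
        rw [hmgf, ← mul_assoc, ← Complex.exp_add, mul_comm]
        push_cast
        ring_nf

lemma inv_Gamma_one_sub {s : ℝ} (hs : 0 < s) :
    (Gamma (1 - s))⁻¹ = Gamma s * Real.sin (π * s) / π := by
  rw [eq_div_of_mul_eq (Gamma_pos_of_pos hs).ne' ((mul_comm _ _).trans (Gamma_mul_Gamma_one_sub s)),
    div_div, inv_div, mul_comm (Real.sin _)]

lemma inv_Gamma_one_sub_eq_im_integral {φ s : ℝ} (hφ : φ ∈ Ioo (π / 2) (3 * π / 2)) (hs : 0 < s) :
    (Gamma (1 - s))⁻¹ = (∫ u in Ioi 0, hankelIntegrand φ s u).im / π := by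
  rw [integral_hankelIntegrand hφ hs, inv_Gamma_one_sub hs, Complex.im_ofReal_mul,
    Complex.exp_ofReal_mul_I_im]

end HankelRay

section Wright

lemma exists_forall_mul_rpow_le {α c : ℝ} (hα : 0 ≤ α) (hα1 : α < 1) (hc : 0 < c) (z : ℝ) :
    ∃ K, ∀ u, 0 ≤ u → z * u ^ α ≤ K + c * u := by
  have hdecay : Tendsto (fun R : ℝ => |z| * R ^ (-(1 - α))) atTop (𝓝 0) := by
    simpa using (tendsto_rpow_neg_atTop (sub_pos.2 hα1)).const_mul |z|
  obtain ⟨R, hRc, hR⟩ := ((hdecay.eventually_le_const hc).and (eventually_gt_atTop 0)).exists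
  refine ⟨|z| * R ^ α, fun u hu => ?_⟩
  have hz : z * u ^ α ≤ |z| * u ^ α := by gcongr; exact le_abs_self z
  rcases le_total u R with huR | hRu
  · have hpow : |z| * u ^ α ≤ |z| * R ^ α := by gcongr
    linarith [mul_nonneg hc.le hu]
  · have hu0 : 0 < u := hR.trans_le hRu
    have hpow : |z| * u ^ α ≤ c * u :=
      calc |z| * u ^ α = |z| * u ^ (-(1 - α)) * u := by
            rw [mul_assoc, ← rpow_add_one hu0.ne']
            ring_nf
        _ ≤ |z| * R ^ (-(1 - α)) * u := by
            gcongr |z| * ?_ * u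
            exact rpow_le_rpow_of_nonpos hR hRu (neg_nonpos.2 (sub_pos.2 hα1).le)
        _ ≤ c * u := by gcongr
    linarith [mul_nonneg (abs_nonneg z) (rpow_nonneg hR.le α)]

lemma integrableOn_rpow_mul_exp_neg_mul_mul_exp_mul_rpow {α s c : ℝ} (hα : 0 ≤ α) (hα1 : α < 1)
    (hs : -1 < s) (hc : 0 < c) (z : ℝ) :
    IntegrableOn (fun u : ℝ => u ^ s * rexp (-c * u) * rexp (z * u ^ α)) (Ioi 0) := by
  obtain ⟨K, hK⟩ := exists_forall_mul_rpow_le hα hα1 (half_pos hc) z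
  have hdom : IntegrableOn (fun u : ℝ => u ^ s * rexp (-(c / 2) * u ^ (1 : ℝ)) * rexp K) (Ioi 0) :=
    (integrableOn_rpow_mul_exp_neg_mul_rpow hs one_pos (half_pos hc)).mul_const _
  refine hdom.mono' (Measurable.aestronglyMeasurable (by fun_prop)) ?_
  filter_upwards [ae_restrict_mem measurableSet_Ioi] with u hu
  have hu0 : 0 ≤ u := le_of_lt hu
  rw [Real.norm_of_nonneg (by positivity), mul_assoc, mul_assoc, ← Real.exp_add, ← Real.exp_add,
    rpow_one]
  gcongr _ * rexp ?_
  linarith [hK u hu0]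

lemma hasSum_integral_hankelIntegrand_mul {α δ φ : ℝ} (hα : 0 ≤ α) (hα1 : α < 1) (hδ : δ < 1)
    (hφ : Real.cos φ < 0) (z : ℝ) :
    HasSum (fun k : ℕ => ∫ u in Ioi 0, hankelIntegrand φ (1 - δ) u *
        ((z * ((u ^ α : ℝ) * Complex.exp ((α * φ : ℝ) * Complex.I))) ^ k / k.factorial))
      (∫ u in Ioi 0, hankelIntegrand φ (1 - δ) u *
        Complex.exp (z * ((u ^ α : ℝ) * Complex.exp ((α * φ : ℝ) * Complex.I)))) := by
  have hsum (u : ℝ) : HasSum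
      (fun k : ℕ => u ^ (-δ) * rexp (- -Real.cos φ * u) * ((|z| * u ^ α) ^ k / k.factorial))
      (u ^ (-δ) * rexp (- -Real.cos φ * u) * rexp (|z| * u ^ α)) := by
    refine HasSum.mul_left _ ?_
    rw [Real.exp_eq_exp_ℝ]
    exact NormedSpace.expSeries_div_hasSum_exp _
  refine MeasureTheory.hasSum_integral_of_dominated_convergence
    (fun k u => u ^ (-δ) * rexp (- -Real.cos φ * u) * ((|z| * u ^ α) ^ k / k.factorial))
    (fun k => ?_) (fun k => ?_) (Eventually.of_forall fun u => (hsum u).summable) ?_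
    (Eventually.of_forall fun u => ?_)
  · exact ((measurable_hankelIntegrand φ (1 - δ)).mul (by fun_prop)).aestronglyMeasurable
  · filter_upwards [ae_restrict_mem measurableSet_Ioi] with u hu
    have hu0 : 0 ≤ u := le_of_lt hu
    rw [norm_mul, norm_hankelIntegrand φ _ hu0, norm_div, norm_pow, norm_mul, norm_mul,
      Complex.norm_exp_ofReal_mul_I, Complex.norm_of_nonneg (rpow_nonneg hu0 _), Complex.norm_real,
      Complex.norm_natCast, Real.norm_eq_abs]
    simp
  · simp_rw [fun u => (hsum u).tsum_eq]
    exact integrableOn_rpow_mul_exp_neg_mul_mul_exp_mul_rpow hα hα1 (by linarith)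
      (neg_pos.2 hφ) |z|
  · refine HasSum.mul_left _ ?_
    rw [Complex.exp_eq_exp_ℂ]
    exact NormedSpace.expSeries_div_hasSum_exp _

lemma wrightW_eq_im_integral {α δ φ : ℝ} (hα : 0 ≤ α) (hα1 : α < 1) (hδ : δ < 1)
    (hφ : φ ∈ Ioo (π / 2) (3 * π / 2)) (z : ℝ) :
    wrightW α δ z = (∫ u in Ioi 0, hankelIntegrand φ (1 - δ) u *
      Complex.exp (z * ((u ^ α : ℝ) * Complex.exp ((α * φ : ℝ) * Complex.I)))).im / π := by
  have hseries := ((Complex.hasSum_iff _ _).1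
    (hasSum_integral_hankelIntegrand_mul hα hα1 hδ (cos_neg_of_mem_Ioo hφ) z)).2.div_const π
  rw [wrightW, ← hseries.tsum_eq]
  congr 1 with k
  have hs : 0 < 1 - δ + α * k := by linarith [mul_nonneg hα k.cast_nonneg]
  have hterm : ∫ u in Ioi 0, hankelIntegrand φ (1 - δ) u *
        ((z * ((u ^ α : ℝ) * Complex.exp ((α * φ : ℝ) * Complex.I))) ^ k / k.factorial) =
      (z ^ k / k.factorial : ℝ) * ∫ u in Ioi 0, hankelIntegrand φ (1 - δ + α * k) u := by
    rw [← MeasureTheory.integral_const_mul]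
    refine setIntegral_congr_fun measurableSet_Ioi fun u hu => ?_
    simp only [hankelIntegrand_add_mul_natCast φ _ α k hu]
    push_cast
    ring
  rw [hterm, Complex.im_ofReal_mul, mul_div_assoc, ← inv_Gamma_one_sub_eq_im_integral hφ hs,
    div_mul_eq_div_mul_one_div, one_div]
  ring_nf

lemma abs_wrightW_neg_le {α δ φ : ℝ} (hα : 0 < α) (hα1 : α < 1) (hδ : δ < 1)
    (hφ : φ ∈ Ioo (π / 2) (3 * π / 2)) (hαφ : 0 < Real.cos (α * φ)) {z : ℝ} (hz : 0 < z) :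
    |wrightW α δ (-z)| ≤
      (z * Real.cos (α * φ)) ^ (-((1 - δ) / α)) * (1 / α) * Gamma ((1 - δ) / α) / π := by
  set c := Real.cos (α * φ)
  have hdom : IntegrableOn (fun u : ℝ => u ^ (-δ) * rexp (-(z * c) * u ^ α)) (Ioi 0) :=
    integrableOn_rpow_mul_exp_neg_mul_rpow (by linarith) hα (mul_pos hz hαφ)
  have hbound := norm_integral_le_of_norm_le hdom (f := fun u : ℝ => hankelIntegrand φ (1 - δ) u *
      Complex.exp ((-z : ℝ) * ((u ^ α : ℝ) * Complex.exp ((α * φ : ℝ) * Complex.I)))) (by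
    filter_upwards [ae_restrict_mem measurableSet_Ioi] with u hu
    have hu0 : 0 ≤ u := le_of_lt hu
    have hre : (((-z : ℝ) : ℂ) * ((u ^ α : ℝ) * Complex.exp ((α * φ : ℝ) * Complex.I))).re =
        -(z * c) * u ^ α := by
      rw [Complex.re_ofReal_mul, Complex.re_ofReal_mul, Complex.exp_ofReal_mul_I_re]
      ring
    have hdecay : rexp (Real.cos φ * u) ≤ 1 :=
      exp_le_one_iff.2 (mul_nonpos_of_nonpos_of_nonneg (cos_neg_of_mem_Ioo hφ).le hu0)
    rw [norm_mul, norm_hankelIntegrand φ _ hu0, Complex.norm_exp, hre, sub_sub_cancel_left]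
    gcongr
    exact mul_le_of_le_one_right (by positivity) hdecay)
  rw [integral_rpow_mul_exp_neg_mul_rpow hα (by linarith) (mul_pos hz hαφ), neg_add_eq_sub,
    neg_div] at hbound
  rw [wrightW_eq_im_integral hα.le hα1 hδ hφ, abs_div, abs_of_pos pi_pos]
  gcongr
  exact (Complex.abs_im_le_norm _).trans hbound

lemma exists_mem_Ioo_cos_mul_pos {α : ℝ} (hα : 0 < α) (hα1 : α < 1) :
    ∃ φ ∈ Ioo (π / 2) (3 * π / 2), 0 < Real.cos (α * φ) := by
  have hgap : 0 < π * (1 - α) := mul_pos pi_pos (sub_pos.2 hα1)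
  have hgap_sq : 0 < π * (1 - α) ^ 2 := mul_pos pi_pos (pow_pos (sub_pos.2 hα1) 2)
  have hπα : 0 < π * α := mul_pos pi_pos hα
  refine ⟨π * (1 - α / 2), ⟨by linarith, by linarith⟩, cos_pos_of_mem_Ioo ⟨?_, by linarith⟩⟩
  have hαφ : 0 < α * (π * (1 - α / 2)) :=
    mul_pos hα (mul_pos pi_pos (by linarith))
  linarith [pi_pos]

lemma exists_abs_wrightW_neg_le {α δ : ℝ} (hα : 0 < α) (hα1 : α < 1) (hδ : δ < 1) :
    ∃ C, 0 ≤ C ∧ ∀ z, 0 < z → |wrightW α δ (-z)| ≤ C * z ^ (-((1 - δ) / α)) := by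
  obtain ⟨φ, hφ, hαφ⟩ := exists_mem_Ioo_cos_mul_pos hα hα1
  have hΓ := Gamma_pos_of_pos (div_pos (sub_pos.2 hδ) hα)
  refine ⟨Real.cos (α * φ) ^ (-((1 - δ) / α)) * (1 / α) * Gamma ((1 - δ) / α) / π,
    div_nonneg (mul_nonneg (by positivity) hΓ.le) pi_pos.le,
    fun z hz => (abs_wrightW_neg_le hα hα1 hδ hφ hαφ hz).trans_eq ?_⟩
  rw [mul_rpow hz.le hαφ.le]
  ring

lemma measurable_wrightW (β δ : ℝ) : Measurable (wrightW β δ) :=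
  Measurable.tsum fun k => by fun_prop

/-- The function `t ↦ t ^ (δ - 1) W(-ℓ t ^ (-α); -α, δ)`, the factor `h_j` of the convolution
defining `S^μ_m`. -/
noncomputable def wrightKernel (α δ ℓ t : ℝ) : ℝ :=
  t ^ (δ - 1) * wrightW α δ (-ℓ * t ^ (-α))

lemma measurable_wrightKernel_mul (α δ ℓ : ℝ) :
    Measurable fun q : ℝ × ℝ => wrightKernel α δ (ℓ * q.1) q.2 :=
  Measurable.mul (by fun_prop) ((measurable_wrightW α δ).comp (by fun_prop))

lemma exists_abs_wrightKernel_le {α δ : ℝ} (hα : 0 < α) (hα1 : α < 1) (hδ : δ < 1) :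
    ∃ C, ∀ ℓ, 0 < ℓ → ∀ t, 0 ≤ t → |wrightKernel α δ ℓ t| ≤ C * ℓ ^ (-((1 - δ) / α)) := by
  obtain ⟨C, hC0, hC⟩ := exists_abs_wrightW_neg_le hα hα1 hδ
  refine ⟨C, fun ℓ hℓ t ht => ?_⟩
  rcases ht.eq_or_lt with rfl | ht
  · rw [wrightKernel, zero_rpow (by linarith), zero_mul, abs_zero]
    positivity
  have hexp : (t ^ (-α)) ^ (-((1 - δ) / α)) = t ^ (1 - δ) := by
    rw [← rpow_mul ht.le, neg_mul_neg, mul_div_cancel₀ _ hα.ne']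
  calc |wrightKernel α δ ℓ t| = t ^ (δ - 1) * |wrightW α δ (-(ℓ * t ^ (-α)))| := by
        rw [wrightKernel, abs_mul, abs_of_pos (rpow_pos_of_pos ht _), neg_mul]
    _ ≤ t ^ (δ - 1) * (C * (ℓ * t ^ (-α)) ^ (-((1 - δ) / α))) := by
        gcongr
        exact hC _ (by positivity)
    _ = C * ℓ ^ (-((1 - δ) / α)) * (t ^ (δ - 1) * t ^ (1 - δ)) := by
        rw [mul_rpow hℓ.le (by positivity), hexp]
        ring
    _ = C * ℓ ^ (-((1 - δ) / α)) := by
        rw [← rpow_add ht, sub_add_sub_cancel, sub_self, rpow_zero, mul_one]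

end Wright

section Convolution

lemma laplaceConv_eq_mul_integral (f g : ℝ → ℝ) (t : ℝ) :
    laplaceConv f g t = t * ∫ s in (0 : ℝ)..1, f (t * s) * g (t - t * s) := by
  simp [laplaceConv, mul_integral_comp_mul_left (f := fun τ => f τ * g (t - τ))]

variable {P : Type*} [MeasurableSpace P]

lemma measurable_laplaceConv_s16 {f g : P → ℝ → ℝ} (hf : Measurable fun q : P × ℝ => f q.1 q.2)
    (hg : Measurable fun q : P × ℝ => g q.1 q.2) :
    Measurable fun q : P × ℝ => laplaceConv (f q.1) (g q.1) q.2 := by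
  have hfg : Measurable fun q : (P × ℝ) × ℝ =>
      f q.1.1 (q.1.2 * q.2) * g q.1.1 (q.1.2 - q.1.2 * q.2) :=
    (hf.comp (by fun_prop : Measurable fun q : (P × ℝ) × ℝ => (q.1.1, q.1.2 * q.2))).mul
      (hg.comp (by fun_prop : Measurable fun q : (P × ℝ) × ℝ => (q.1.1, q.1.2 - q.1.2 * q.2)))
  simp only [laplaceConv_eq_mul_integral, integral_of_le zero_le_one]
  exact measurable_snd.mul hfg.stronglyMeasurable.integral_prod_right'.measurable

lemma measurable_iterConv_s16 (n : ℕ) {h : P → Fin (n + 1) → ℝ → ℝ}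
    (hh : ∀ j, Measurable fun q : P × ℝ => h q.1 j q.2) :
    Measurable fun q : P × ℝ => iterConv n (h q.1) q.2 := by
  induction n with
  | zero => exact hh 0
  | succ n ih =>
    exact measurable_laplaceConv_s16 (f := fun p => iterConv n fun i => h p i.castSucc)
      (g := fun p => h p (Fin.last (n + 1)))
      (ih (h := fun p i => h p i.castSucc) fun j => hh j.castSucc) (hh (Fin.last (n + 1)))

lemma abs_laplaceConv_le {f g : ℝ → ℝ} {t A B : ℝ} (ht : 0 ≤ t)
    (hf : ∀ τ ∈ Icc 0 t, |f τ| ≤ A) (hg : ∀ τ ∈ Icc 0 t, |g τ| ≤ B) :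
    |laplaceConv f g t| ≤ t * (A * B) := by
  have hA : 0 ≤ A := (abs_nonneg _).trans (hf 0 ⟨le_rfl, ht⟩)
  have hbound : ∀ τ ∈ uIoc 0 t, ‖f τ * g (t - τ)‖ ≤ A * B := by
    intro τ hτ
    rw [uIoc_of_le ht] at hτ
    rw [norm_mul]
    exact mul_le_mul (hf τ (Ioc_subset_Icc_self hτ))
      (hg _ ⟨sub_nonneg.2 hτ.2, sub_le_self _ hτ.1.le⟩) (norm_nonneg _) hA
  simpa only [sub_zero, abs_of_nonneg ht, Real.norm_eq_abs, mul_comm t, laplaceConv] using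
    norm_integral_le_of_norm_le_const hbound

lemma abs_iterConv_le (n : ℕ) {t : ℝ} {h : Fin (n + 1) → ℝ → ℝ} {B : Fin (n + 1) → ℝ}
    (ht : 0 ≤ t) (hB : ∀ j, ∀ τ ∈ Icc 0 t, |h j τ| ≤ B j) :
    |iterConv n h t| ≤ t ^ n * ∏ j, B j := by
  have hB0 (j) : 0 ≤ B j := (abs_nonneg _).trans (hB j 0 ⟨le_rfl, ht⟩)
  induction n generalizing t with
  | zero => simpa [iterConv] using hB 0 t ⟨ht, le_rfl⟩
  | succ n ih =>
    have hinit : ∀ τ ∈ Icc 0 t,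
        |iterConv n (fun j => h j.castSucc) τ| ≤ t ^ n * ∏ j : Fin (n + 1), B j.castSucc := by
      intro τ hτ
      have hprod : 0 ≤ ∏ j : Fin (n + 1), B j.castSucc := Finset.prod_nonneg fun j _ => hB0 _
      have hτt : τ ^ n ≤ t ^ n := pow_le_pow_left₀ hτ.1 hτ.2 n
      exact (ih hτ.1 (fun j σ hσ => hB j.castSucc σ ⟨hσ.1, hσ.2.trans hτ.2⟩) fun j => hB0 _).trans
        (mul_le_mul_of_nonneg_right hτt hprod)
    calc |iterConv (n + 1) h t|
        ≤ t * (t ^ n * (∏ j : Fin (n + 1), B j.castSucc) * B (Fin.last (n + 1))) :=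
          abs_laplaceConv_le ht hinit (hB _)
      _ = t ^ (n + 1) * ∏ j, B j := by
          rw [Fin.prod_univ_castSucc B]
          ring

end Convolution

section DecayOfSconv

lemma Sconv_eq_iterConv_wrightKernel (n : ℕ) (μ : ℝ) (α ℓ : Fin (n + 1) → ℝ) :
    Sconv n μ α ℓ =
      iterConv n fun j => wrightKernel (α j) (if j = 0 then μ else 0) (ℓ j) :=
  rfl

lemma measurable_Sconv (n : ℕ) (μ : ℝ) (α lam : Fin (n + 1) → ℝ) (t : ℝ) :
    Measurable fun p : ℝ => Sconv n μ α (fun j => lam j * p) t := by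
  have hjoint := measurable_iterConv_s16 n (h := fun (p : ℝ) j =>
    wrightKernel (α j) (if j = 0 then μ else 0) (lam j * p)) fun j =>
      measurable_wrightKernel_mul _ _ _
  exact hjoint.comp measurable_prodMk_right

/-- The exponent `M = ∑ (1 - μ_j) / α_j` for which `S^μ_m(t; -λ₁p, …, -λ_m p)` is `O(p ^ (-M))`,
where `μ₁ = μ` and `μ_j = 0` for `j ≥ 2`. -/
noncomputable def decayExponent {n : ℕ} (μ : ℝ) (α : Fin (n + 1) → ℝ) : ℝ :=
  ∑ j, (1 - if j = 0 then μ else 0) / α j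

variable {n : ℕ} {μ : ℝ} {α lam : Fin (n + 1) → ℝ}

lemma exists_abs_Sconv_le (hμ : μ < 1) (hpos : ∀ j, 0 < α j) (hlt1 : ∀ j, α j < 1)
    (hlam : ∀ j, 0 < lam j) {t : ℝ} (ht : 0 ≤ t) :
    ∃ C, ∀ p, 0 < p →
      |Sconv n μ α (fun j => lam j * p) t| ≤ C * p ^ (-decayExponent μ α) := by
  have hδ (j : Fin (n + 1)) : (if j = 0 then μ else 0) < 1 := by
    split_ifs <;> linarith
  choose C hC using fun j => exists_abs_wrightKernel_le (hpos j) (hlt1 j) (hδ j)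
  refine ⟨t ^ n * ∏ j, C j * lam j ^ (-((1 - if j = 0 then μ else 0) / α j)), fun p hp => ?_⟩
  rw [Sconv_eq_iterConv_wrightKernel]
  refine (abs_iterConv_le n ht fun j τ hτ =>
    hC j (lam j * p) (mul_pos (hlam j) hp) τ hτ.1).trans_eq ?_
  simp_rw [fun j => mul_rpow (hlam j).le hp.le (z := -((1 - if j = 0 then μ else 0) / α j)),
    ← mul_assoc]
  rw [Finset.prod_mul_distrib, ← rpow_sum_of_pos hp, Finset.sum_neg_distrib, decayExponent,
    mul_assoc]

lemma div_le_decayExponent (hμ : μ ≤ 1) (hpos : ∀ j, 0 < α j) :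
    (1 - μ) / α 0 ≤ decayExponent μ α := by
  refine (le_of_eq (by simp)).trans (Finset.single_le_sum
    (f := fun j : Fin (n + 1) => (1 - if j = 0 then μ else 0) / α j) (fun j _ => ?_)
    (Finset.mem_univ 0))
  exact div_nonneg (by split_ifs <;> linarith) (hpos j).le

end DecayOfSconv

section Gaussian

lemma integrableOn_rpow_neg_mul_exp_neg_div {a c : ℝ} (ha : 1 < a) (hc : 0 < c) :
    IntegrableOn (fun p : ℝ => p ^ (-a) * rexp (-c / p)) (Ioi 0) := by
  have hinv := integrableOn_rpow_mul_exp_neg_mul_rpow (s := a - 2) (by linarith) one_pos hc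
  refine ((integrableOn_Ioi_comp_rpow_iff' _ (by norm_num : (-1 : ℝ) ≠ 0)).2 hinv).congr_fun
    (fun p (hp : 0 < p) => ?_) measurableSet_Ioi
  simp only [smul_eq_mul, rpow_one]
  rw [← mul_assoc, ← rpow_mul hp.le, ← rpow_add hp, rpow_neg_one, div_eq_mul_inv]
  ring_nf

lemma hasDerivAt_exp_neg_sq_div (p y : ℝ) :
    HasDerivAt (fun y => rexp (-(y ^ 2) / (4 * p)))
      (-(y / (2 * p)) * rexp (-(y ^ 2) / (4 * p))) y := by
  have hexponent : HasDerivAt (fun y => -(y ^ 2) / (4 * p)) (-(y / (2 * p))) y := by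
    refine ((hasDerivAt_pow 2 y).fun_neg.div_const (4 * p)).congr_deriv ?_
    push_cast
    rw [show 4 * p = 2 * (2 * p) by ring, pow_one, ← mul_neg,
      mul_div_mul_left _ _ two_ne_zero, neg_div]
  exact hexponent.exp.congr_deriv (mul_comm _ _)

variable {G : ℝ → ℝ} {C a x : ℝ}

lemma integrableOn_exp_neg_sq_div_mul (hG : AEStronglyMeasurable G (volume.restrict (Ioi 0)))
    (ha : 1 < a) (hGC : ∀ p, 0 < p → |G p| ≤ C * p ^ (-a)) (hx : x ≠ 0) :
    IntegrableOn (fun p => rexp (-(x ^ 2) / (4 * p)) * G p) (Ioi 0) := by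
  have hdom :=
    (integrableOn_rpow_neg_mul_exp_neg_div ha (c := x ^ 2 / 4) (by positivity)).const_mul C
  refine hdom.mono' (AEStronglyMeasurable.mul (Measurable.aestronglyMeasurable (by fun_prop)) hG) ?_
  filter_upwards [ae_restrict_mem measurableSet_Ioi] with p hp
  calc ‖rexp (-(x ^ 2) / (4 * p)) * G p‖ = rexp (-(x ^ 2 / 4) / p) * |G p| := by
        rw [norm_mul, Real.norm_eq_abs, abs_exp, Real.norm_eq_abs, ← neg_div, div_div]
    _ ≤ rexp (-(x ^ 2 / 4) / p) * (C * p ^ (-a)) := by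
        gcongr
        exact hGC p hp
    _ = C * (p ^ (-a) * rexp (-(x ^ 2 / 4) / p)) := by ring

lemma abs_deriv_exp_neg_sq_div_mul_le (hGC : ∀ p, 0 < p → |G p| ≤ C * p ^ (-a)) {p y : ℝ}
    (hp : 0 < p) (hxy : |x| / 2 ≤ |y|) (hyx : |y| ≤ 2 * |x|) :
    |-(y / (2 * p)) * rexp (-(y ^ 2) / (4 * p)) * G p| ≤
      |x| * C * (p ^ (-(a + 1)) * rexp (-(x ^ 2 / 16) / p)) := by
  have hsq : x ^ 2 / 4 ≤ y ^ 2 := by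
    rw [← sq_abs x, ← sq_abs y]
    linarith [pow_le_pow_left₀ (by positivity) hxy 2]
  have hexp : -(y ^ 2) / (4 * p) ≤ -(x ^ 2 / 16) / p := by
    rw [div_mul_eq_div_div]
    gcongr
    linarith
  have hfactor : |-(y / (2 * p))| ≤ |x| * p ^ (-1 : ℝ) := by
    rw [abs_neg, abs_div, abs_of_pos (show 0 < 2 * p by positivity), rpow_neg_one,
      ← div_eq_mul_inv, div_mul_eq_div_div]
    gcongr
    linarith
  calc |-(y / (2 * p)) * rexp (-(y ^ 2) / (4 * p)) * G p|
      = |-(y / (2 * p))| * rexp (-(y ^ 2) / (4 * p)) * |G p| := by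
        rw [abs_mul, abs_mul, abs_exp]
    _ ≤ |x| * p ^ (-1 : ℝ) * rexp (-(x ^ 2 / 16) / p) * (C * p ^ (-a)) := by
        gcongr
        exact hGC p hp
    _ = |x| * C * (p ^ (-a) * p ^ (-1 : ℝ) * rexp (-(x ^ 2 / 16) / p)) := by ring
    _ = |x| * C * (p ^ (-(a + 1)) * rexp (-(x ^ 2 / 16) / p)) := by
        rw [← rpow_add hp, ← neg_add]

lemma hasDerivAt_integral_exp_neg_sq_div_mul
    (hG : AEStronglyMeasurable G (volume.restrict (Ioi 0))) (ha : 1 < a)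
    (hGC : ∀ p, 0 < p → |G p| ≤ C * p ^ (-a)) (hx : x ≠ 0) :
    HasDerivAt (fun y => ∫ p in Ioi 0, rexp (-(y ^ 2) / (4 * p)) * G p)
      (∫ p in Ioi 0, -(x / (2 * p)) * rexp (-(x ^ 2) / (4 * p)) * G p) x := by
  have hx0 : 0 < |x| := abs_pos.2 hx
  have hnhds : {y : ℝ | |y| ∈ Icc (|x| / 2) (2 * |x|)} ∈ 𝓝 x :=
    continuous_abs.continuousAt (Icc_mem_nhds (half_lt_self hx0) (lt_two_mul_self hx0))
  refine (_root_.hasDerivAt_integral_of_dominated_loc_of_deriv_le hnhds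
    (F := fun y p => rexp (-(y ^ 2) / (4 * p)) * G p)
    (F' := fun y p => -(y / (2 * p)) * rexp (-(y ^ 2) / (4 * p)) * G p)
    (Eventually.of_forall fun y =>
      AEStronglyMeasurable.mul (Measurable.aestronglyMeasurable (by fun_prop)) hG)
    (integrableOn_exp_neg_sq_div_mul hG ha hGC hx)
    (AEStronglyMeasurable.mul (Measurable.aestronglyMeasurable (by fun_prop)) hG)
    (bound := fun p => |x| * C * (p ^ (-(a + 1)) * rexp (-(x ^ 2 / 16) / p))) ?_
    ((integrableOn_rpow_neg_mul_exp_neg_div (by linarith) (by positivity)).const_mul _)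
    (Eventually.of_forall fun p y _ => (hasDerivAt_exp_neg_sq_div p y).mul_const (G p))).2
  filter_upwards [ae_restrict_mem measurableSet_Ioi] with p hp y hy
  exact abs_deriv_exp_neg_sq_div_mul_le hGC hp hy.1 hy.2

lemma hasDerivAt_integral_rpow_mul_exp_neg_sq_div_mul {S : ℝ → ℝ} {s : ℝ} (hS : Measurable S)
    (has : 1 + s < a) (hSC : ∀ p, 0 < p → |S p| ≤ C * p ^ (-a)) (hx : x ≠ 0) :
    HasDerivAt (fun y => ∫ p in Ioi 0, p ^ s * rexp (-(y ^ 2) / (4 * p)) * S p)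
      (-(x / 2) * ∫ p in Ioi 0, p ^ (s - 1) * rexp (-(x ^ 2) / (4 * p)) * S p) x := by
  have hG (p : ℝ) (hp : 0 < p) : |p ^ s * S p| ≤ C * p ^ (-(a - s)) := by
    rw [abs_mul, abs_of_pos (rpow_pos_of_pos hp s), neg_sub, sub_eq_add_neg, rpow_add hp,
      mul_left_comm]
    gcongr
    exact hSC p hp
  have hderiv := hasDerivAt_integral_exp_neg_sq_div_mul
    (Measurable.aestronglyMeasurable (by fun_prop)) (lt_sub_iff_add_lt.2 has) hG hx
  have hcomm (y p : ℝ) : rexp (-(y ^ 2) / (4 * p)) * (p ^ s * S p) =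
      p ^ s * rexp (-(y ^ 2) / (4 * p)) * S p := by ring
  simp only [hcomm] at hderiv
  refine hderiv.congr_deriv ?_
  rw [← MeasureTheory.integral_const_mul]
  refine setIntegral_congr_fun measurableSet_Ioi fun p (hp : 0 < p) => ?_
  simp only [rpow_sub_one hp.ne']
  field_simp

end Gaussian

theorem kerE_hasDerivAt_general
    (m : ℕ) (α lam : Fin (m + 1) → ℝ) (μ : ℝ)
    (hμ : α 0 < 2 * (1 - μ)) (hpos : ∀ j, 0 < α j) (hlt1 : ∀ j, α j < 1)
    (hlam : ∀ j, 0 < lam j)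
    (x t : ℝ) (hx : x ≠ 0) (ht : 0 < t) :
    HasDerivAt (fun y => Gam1 m α lam μ y t)
      (-(x / 2) * (4 * π) ^ (-(1/2 : ℝ)) *
        ∫ p in Ioi (0 : ℝ),
          p ^ (-(3/2 : ℝ)) * rexp (-(x ^ 2) / (4 * p)) *
            Sconv m μ α (fun j => lam j * p) t) x := by
  have hμ1 : μ < 1 := by linarith [hpos 0]
  obtain ⟨C, hC⟩ := exists_abs_Sconv_le hμ1 hpos hlt1 hlam ht.le
  have hdecay : 1 + -(1/2 : ℝ) < decayExponent μ α :=
    calc 1 + -(1/2 : ℝ) < (1 - μ) / α 0 := by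
          rw [lt_div_iff₀ (hpos 0)]
          linarith
      _ ≤ decayExponent μ α := div_le_decayExponent hμ1.le hpos
  have hderiv := hasDerivAt_integral_rpow_mul_exp_neg_sq_div_mul
    (measurable_Sconv m μ α lam t) hdecay hC hx
  simp only [Gam1, sq_abs]
  refine (hderiv.const_mul ((4 * π) ^ (-(1/2 : ℝ)))).congr_deriv ?_
  rw [mul_left_comm, ← mul_assoc, show -(1/2 : ℝ) - 1 = -(3/2) by norm_num]

/-- Integral representation of the spatial derivative of `E`: for `x ≠ 0`,
`t > 0`, `E` is differentiable in `x` with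
`E_x(x,t) = -(x/2)(4π)^{-1/2} ∫₀^∞ p^{-3/2} e^{-x²/(4p)} S⁰_m(t; -λ₁p,…,-λ_m p; -α₁,…,-α_m) dp`. -/
theorem kerE_hasDerivAt
    (m : ℕ) (α lam : Fin (m + 1) → ℝ)
    (hmono : StrictMono α) (hpos : ∀ j, 0 < α j) (hlt1 : ∀ j, α j < 1)
    (hlam : ∀ j, 0 < lam j)
    (x t : ℝ) (hx : x ≠ 0) (ht : 0 < t) :
    HasDerivAt (fun y => kerE m α lam y t)
      (-(x / 2) * (4 * Real.pi) ^ (-(1/2 : ℝ)) *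
        ∫ p in Set.Ioi (0:ℝ),
          p ^ (-(3/2 : ℝ)) * Real.exp (-(x ^ 2) / (4 * p)) *
            Sconv m 0 α (fun j => lam j * p) t) x :=
  kerE_hasDerivAt_general m α lam 0 (by linarith [hlt1 0]) hpos hlt1 hlam x t hx ht
end
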